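/- Let N ≥ 2, κ ∈ (0, 1/4], α₊ = 1 + √(1−4κ), and 1 < q < q_c = (2N+α₊)/(2N−4+α₊), so that ℓ_{N,q} = (2/(q−1))(2q/(q−1) − N) > μ_{κ,1} = (α₊/2)(N + α₊/2 − 2). Define, for functions w on (0, π/2), the functional J(w) = ∫₀^{π/2} [ w'(θ)² − (ℓ_{N,q} − μ_{κ,1}) w(θ)² + (2/(q+1)) (cos θ)^{(q−1)α₊/2} |w(θ)|^{q+1} ] (cos θ)^{α₊} (sin θ)^{N−2} dθ, and call w admissible if w is C¹ on (0, π/2) with ∫₀^{π/2} (w'² + w²)(cos θ)^{α₊}(sin θ)^{N−2} dθ < ∞ and ∫₀^{π/2} |w|^{q+1}(cos θ)^{(q+1)α₊/2}(sin θ)^{N−2} dθ < ∞. Then there exists an admissible nonnegative smooth function w₀ with J(w₀) < 0 and J(w₀) ≤ J(w) for every admissible w. (This is the zonal form of the existence of a nontrivial minimizer of the energy functional 𝒥_κ when ℓ_{N,q} > μ_{κ,1}; the corresponding ω = ρ_κ w₀ is a positive separable solution profile.) -/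

import Mathlib

open Real MeasureTheory

/-- The zonal energy functional `𝒥_κ` on `(0, π/2)`:
`J(w) = ∫₀^{π/2} [w'² - (ℓ-μ₁)w² + (2/(q+1))(cos θ)^{(q-1)α/2}|w|^{q+1}] (cos θ)^α (sin θ)^{N-2} dθ`. -/
noncomputable def zonalJ (N : ℕ) (α ℓ μ₁ q : ℝ) (w : ℝ → ℝ) : ℝ :=
  ∫ θ in Set.Ioo 0 (π/2),
    ((deriv w θ)^2 - (ℓ - μ₁) * (w θ)^2
      + (2/(q+1)) * (Real.cos θ) ^ ((q-1)*α/2) * |w θ| ^ (q+1))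
    * (Real.cos θ) ^ α * (Real.sin θ)^(N-2)

/-- Admissibility for `zonalJ`: `w` is `C¹` on `(0, π/2)` with finite weighted `H¹` norm
and finite weighted `L^{q+1}` norm. -/
def ZonalAdmissible (N : ℕ) (α q : ℝ) (w : ℝ → ℝ) : Prop :=
  ContDiffOn ℝ 1 w (Set.Ioo 0 (π/2)) ∧
  MeasureTheory.IntegrableOn
    (fun θ => ((deriv w θ)^2 + (w θ)^2) * (Real.cos θ) ^ α * (Real.sin θ)^(N-2))
    (Set.Ioo 0 (π/2)) volume ∧
  MeasureTheory.IntegrableOn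
    (fun θ => |w θ| ^ (q+1) * (Real.cos θ) ^ ((q+1)*α/2) * (Real.sin θ)^(N-2))
    (Set.Ioo 0 (π/2)) volume

namespace ZonalAux
open Set Filter Topology

section iter
lemma it_int {b : ℝ} {F : ℝ → ℝ → ℝ} (hFm : Measurable (Function.uncurry F))
    (hFc : ContinuousOn (Function.uncurry F) (Ico 0 b ×ˢ Ici 0))
    {ζ Z : ℝ → ℝ} (hζ0 : ∀ s ∈ Ico 0 b, 0 ≤ ζ s) (hζZ : ∀ s ∈ Ico 0 b, ζ s ≤ Z s)
    (hζc : Continuous ζ) (hZc : Continuous Z)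
    (hmono : ∀ s ∈ Ico 0 b, ∀ x y, ζ s ≤ x → x ≤ y → y ≤ Z s → F s x ≤ F s y)
    {z : ℝ → ℝ} (hz : AEMeasurable z (volume.restrict (Ioo 0 b)))
    (hzb : ∀ s ∈ Ico 0 b, ζ s ≤ z s ∧ z s ≤ Z s) {t : ℝ} (ht : t ∈ Ico 0 b) :
    IntervalIntegrable (fun s => F s (z s)) volume 0 t := by
  have h1 : ∀ y : ℝ → ℝ, Continuous y → (∀ s ∈ Ico 0 b, 0 ≤ y s) →
      IntegrableOn (fun s => F s (y s)) (Ioc 0 t) := by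
    intro y hy hy0
    refine (ContinuousOn.integrableOn_Icc ?_).mono_set Ioc_subset_Icc_self
    have : ContinuousOn (fun s => (s, y s)) (Icc 0 t) := by fun_prop
    refine hFc.comp this ?_
    intro s hs
    have : s ∈ Ico 0 b := ⟨hs.1, hs.2.trans_lt ht.2⟩
    exact ⟨this, hy0 s this⟩
  rw [intervalIntegrable_iff_integrableOn_Ioc_of_le ht.1]
  have hsub : ∀ s ∈ Ioc 0 t, s ∈ Ico 0 b := fun s hs => ⟨hs.1.le, hs.2.trans_lt ht.2⟩
  refine integrable_of_le_of_le (g₁ := fun s => F s (ζ s)) (g₂ := fun s => F s (Z s)) ?_ ?_ ?_ ?_ ?_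
  · have hz' : AEMeasurable z (volume.restrict (Ioc 0 t)) :=
      hz.mono_measure (Measure.restrict_mono (fun s (hs : s ∈ Ioc 0 t) => (⟨hs.1, hs.2.trans_lt ht.2⟩ : s ∈ Ioo 0 b)) le_rfl)
    have : AEMeasurable (fun s => (s, z s)) (volume.restrict (Ioc 0 t)) := aemeasurable_id.prodMk hz'
    exact (hFm.comp_aemeasurable this).aestronglyMeasurable
  · filter_upwards [ae_restrict_mem measurableSet_Ioc] with s hs
    have := hsub s hs
    exact hmono s this _ _ le_rfl (hzb s this).1 (hzb s this).2
  · filter_upwards [ae_restrict_mem measurableSet_Ioc] with s hs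
    have := hsub s hs
    exact hmono s this _ _ (hzb s this).1 (hzb s this).2 le_rfl
  · exact h1 ζ hζc hζ0
  · exact h1 Z hZc (fun s hs => (hζ0 s hs).trans (hζZ s hs))

lemma iter_exists {b : ℝ} (hb : 0 < b) {a : ℝ → ℝ} (ha : ContinuousOn a (Ioo 0 b))
    (ha0 : ∀ t ∈ Ioo 0 b, 0 < a t) {F : ℝ → ℝ → ℝ} (hFm : Measurable (Function.uncurry F))
    (hFc : ContinuousOn (Function.uncurry F) (Ico 0 b ×ˢ Ici 0))
    {ζ Z ζ' Z' : ℝ → ℝ} (hζ0 : ∀ s ∈ Ico 0 b, 0 ≤ ζ s) (hζZ : ∀ s ∈ Ico 0 b, ζ s ≤ Z s)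
    (hζd : ∀ s, HasDerivAt ζ (ζ' s) s) (hZd : ∀ s, HasDerivAt Z (Z' s) s)
    (hζc' : Continuous ζ') (hZc' : Continuous Z') (hζb : ζ b = 0) (hZb : Z b = 0)
    (hmono : ∀ s ∈ Ico 0 b, ∀ x y, ζ s ≤ x → x ≤ y → y ≤ Z s → F s x ≤ F s y)
    (hsub : ∀ t ∈ Ioo 0 b, -(a t * ζ' t) ≤ ∫ s in 0..t, F s (ζ s))
    (hsup : ∀ t ∈ Ioo 0 b, (∫ s in 0..t, F s (Z s)) ≤ -(a t * Z' t)) :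
    ∃ z : ℝ → ℝ, ContinuousOn z (Ico 0 b) ∧ (∀ s ∈ Ico 0 b, ζ s ≤ z s ∧ z s ≤ Z s) ∧
      (∀ t ∈ Ioo 0 b, HasDerivAt z (-((∫ s in 0..t, F s (z s)) / a t)) t) ∧
      (∀ t ∈ Ioo 0 b, HasDerivAt (fun t => ∫ s in 0..t, F s (z s)) (F t (z t)) t) ∧
      Tendsto (fun t => ∫ s in 0..t, F s (z s)) (𝓝[>] 0) (𝓝 0) := by
  have hζc : Continuous ζ := continuous_iff_continuousAt.2 fun s => (hζd s).continuousAt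
  have hZc : Continuous Z := continuous_iff_continuousAt.2 fun s => (hZd s).continuousAt
  set S : Set (ℝ → ℝ) := {z | AEMeasurable z (volume.restrict (Ioo 0 b)) ∧
    ∀ s ∈ Ico 0 b, ζ s ≤ z s ∧ z s ≤ Z s} with hS
  have hint : ∀ z ∈ S, ∀ t ∈ Ico 0 b, IntervalIntegrable (fun s => F s (z s)) volume 0 t :=
    fun z hz t ht => it_int hFm hFc hζ0 hζZ hζc hZc hmono hz.1 hz.2 ht
  have hζS : ζ ∈ S := ⟨hζc.measurable.aemeasurable, fun s hs => ⟨le_rfl, hζZ s hs⟩⟩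
  have hZS : Z ∈ S := ⟨hZc.measurable.aemeasurable, fun s hs => ⟨hζZ s hs, le_rfl⟩⟩
  set I : (ℝ → ℝ) → ℝ → ℝ := fun z t => (∫ s in 0..t, F s (z s)) / a t with hI
  set T : (ℝ → ℝ) → ℝ → ℝ := fun z θ => ∫ t in θ..b, I z t with hT
  have hIco : ∀ t ∈ Ioo 0 b, t ∈ Ico 0 b := fun t ht => ⟨ht.1.le, ht.2⟩
  have hImono : ∀ z₁ ∈ S, ∀ z₂ ∈ S, (∀ s ∈ Ico 0 b, z₁ s ≤ z₂ s) → ∀ t ∈ Ioo 0 b, I z₁ t ≤ I z₂ t := by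
    intro z₁ h1 z₂ h2 h t ht
    refine div_le_div_of_nonneg_right ?_ (ha0 t ht).le
    refine intervalIntegral.integral_mono_on ht.1.le (hint _ h1 _ (hIco t ht)) (hint _ h2 _ (hIco t ht)) ?_
    intro s hs
    have hs' : s ∈ Ico 0 b := ⟨hs.1, hs.2.trans_lt ht.2⟩
    exact hmono s hs' _ _ (h1.2 s hs').1 (h s hs') (h2.2 s hs').2
  have hIlow : ∀ z ∈ S, ∀ t ∈ Ioo 0 b, -ζ' t ≤ I z t := by
    intro z hz t ht
    refine le_trans ?_ (hImono ζ hζS z hz (fun s hs => (hz.2 s hs).1) t ht)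
    rw [hI]; simp only
    rw [le_div_iff₀ (ha0 t ht)]
    have := hsub t ht; linarith
  have hIup : ∀ z ∈ S, ∀ t ∈ Ioo 0 b, I z t ≤ -Z' t := by
    intro z hz t ht
    refine le_trans (hImono z hz Z hZS (fun s hs => (hz.2 s hs).2) t ht) ?_
    rw [hI]; simp only
    rw [div_le_iff₀ (ha0 t ht)]
    have := hsup t ht; linarith
  have hIc : ∀ z ∈ S, ContinuousOn (I z) (Ioo 0 b) := by
    intro z hz
    refine ContinuousOn.div ?_ ha (fun t ht => (ha0 t ht).ne')
    intro t ht
    obtain ⟨r, hr1, hr2⟩ := exists_between ht.2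
    have h0r : 0 ≤ r := ht.1.le.trans hr1.le
    have := intervalIntegral.continuousOn_primitive_interval' (hint z hz r ⟨h0r, hr2⟩) left_mem_uIcc
    rw [uIcc_of_le h0r] at this
    exact (this.continuousAt (Icc_mem_nhds ht.1 hr1)).continuousWithinAt
  have hIint : ∀ z ∈ S, IntegrableOn (I z) (Ioo 0 b) := by
    intro z hz
    refine integrable_of_le_of_le (g₁ := fun s => -ζ' s) (g₂ := fun s => -Z' s) ?_ ?_ ?_ ?_ ?_
    · exact (hIc z hz).aestronglyMeasurable measurableSet_Ioo
    · filter_upwards [ae_restrict_mem measurableSet_Ioo] with s hs using hIlow z hz s hs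
    · filter_upwards [ae_restrict_mem measurableSet_Ioo] with s hs using hIup z hz s hs
    · exact (hζc'.neg.integrableOn_Icc (a := 0) (b := b)).mono_set Ioo_subset_Icc_self
    · exact (hZc'.neg.integrableOn_Icc (a := 0) (b := b)).mono_set Ioo_subset_Icc_self
  have hIii : ∀ z ∈ S, ∀ θ ∈ Icc 0 b, IntervalIntegrable (I z) volume θ b := by
    intro z hz θ hθ
    rw [intervalIntegrable_iff_integrableOn_Ioo_of_le hθ.2]
    exact (hIint z hz).mono_set (Ioo_subset_Ioo_left hθ.1)
  have hTc : ∀ z ∈ S, ContinuousOn (T z) (Icc 0 b) := by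
    intro z hz
    have := intervalIntegral.continuousOn_primitive_interval_left (f := I z) (μ := volume) (a := 0) (b := b)
      (by rw [uIcc_of_le hb.le, integrableOn_Icc_iff_integrableOn_Ioo]; exact hIint z hz)
    rwa [uIcc_of_le hb.le] at this
  have hderint : ∀ (y y' : ℝ → ℝ), (∀ s, HasDerivAt y (y' s) s) → Continuous y' → y b = 0 → ∀ θ,
      ∫ t in θ..b, -y' t = y θ := by
    intro y y' hy hc h0 θ
    rw [intervalIntegral.integral_neg, intervalIntegral.integral_eq_sub_of_hasDerivAt (fun s _ => hy s)
      (hc.intervalIntegrable _ _), h0]; ring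
  have hTS : ∀ z ∈ S, T z ∈ S := by
    intro z hz
    refine ⟨((hTc z hz).mono Ioo_subset_Icc_self).aemeasurable measurableSet_Ioo, ?_⟩
    intro θ hθ
    have hθ' : θ ∈ Icc 0 b := ⟨hθ.1, hθ.2.le⟩
    constructor
    · rw [← hderint ζ ζ' hζd hζc' hζb θ]
      refine intervalIntegral.integral_mono_on_of_le_Ioo hθ.2.le (hζc'.neg.intervalIntegrable _ _) (hIii z hz θ hθ') ?_
      intro t ht
      exact hIlow z hz t ⟨hθ.1.trans_lt ht.1, ht.2⟩
    · rw [← hderint Z Z' hZd hZc' hZb θ]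
      refine intervalIntegral.integral_mono_on_of_le_Ioo hθ.2.le (hIii z hz θ hθ') (hZc'.neg.intervalIntegrable _ _) ?_
      intro t ht
      exact hIup z hz t ⟨hθ.1.trans_lt ht.1, ht.2⟩
  have hTmono : ∀ z₁ ∈ S, ∀ z₂ ∈ S, (∀ s ∈ Ico 0 b, z₁ s ≤ z₂ s) → ∀ s ∈ Ico 0 b, T z₁ s ≤ T z₂ s := by
    intro z₁ h1 z₂ h2 h θ hθ
    refine intervalIntegral.integral_mono_on_of_le_Ioo hθ.2.le (hIii _ h1 θ ⟨hθ.1, hθ.2.le⟩) (hIii _ h2 θ ⟨hθ.1, hθ.2.le⟩) ?_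
    intro t ht
    exact hImono z₁ h1 z₂ h2 h t ⟨hθ.1.trans_lt ht.1, ht.2⟩
  set u : ℕ → ℝ → ℝ := fun n => T^[n] ζ with hu
  have hus : ∀ n, u (n+1) = T (u n) := fun n => Function.iterate_succ_apply' _ _ _
  have huS : ∀ n, u n ∈ S := by
    intro n
    induction n with
    | zero => exact hζS
    | succ k ih => rw [hus]; exact hTS _ ih
  have humono : ∀ n, ∀ s ∈ Ico 0 b, u n s ≤ u (n+1) s := by
    intro n
    induction n with
    | zero => intro s hs; rw [hus]; exact ((hTS _ hζS).2 s hs).1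
    | succ k ih =>
      rw [hus (k+1)]; nth_rewrite 1 [hus k]
      exact hTmono _ (huS k) _ (huS (k+1)) ih
  set z : ℝ → ℝ := fun s => ⨆ n, u n s with hzdef
  have hlim : ∀ s ∈ Ico 0 b, Tendsto (fun n => u n s) atTop (𝓝 (z s)) := by
    intro s hs
    refine tendsto_atTop_ciSup (monotone_nat_of_le_succ (fun n => humono n s hs)) ⟨Z s, ?_⟩
    rintro _ ⟨n, rfl⟩
    exact ((huS n).2 s hs).2
  have hzS : z ∈ S := by
    constructor
    · refine aemeasurable_of_tendsto_metrizable_ae atTop (fun n => (huS n).1) ?_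
      filter_upwards [ae_restrict_mem measurableSet_Ioo] with s hs using hlim s (hIco s hs)
    · intro s hs
      exact ⟨ge_of_tendsto' (hlim s hs) fun n => ((huS n).2 s hs).1,
        le_of_tendsto' (hlim s hs) fun n => ((huS n).2 s hs).2⟩
  have hIlim : ∀ t ∈ Ioo 0 b, Tendsto (fun n => I (u n) t) atTop (𝓝 (I z t)) := by
    intro t ht
    refine Tendsto.div_const ?_ _
    have hsub' : ∀ s ∈ uIoc 0 t, s ∈ Ico 0 b := by
      intro s hs
      rw [uIoc_of_le ht.1.le] at hs
      exact ⟨hs.1.le, hs.2.trans_lt ht.2⟩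
    refine intervalIntegral.tendsto_integral_filter_of_dominated_convergence
      (fun s => |F s (ζ s)| + |F s (Z s)|) ?_ ?_ ?_ ?_
    · refine Eventually.of_forall fun n => ?_
      have := (hint _ (huS n) t (hIco t ht)).aestronglyMeasurable
      rwa [uIoc_of_le ht.1.le]
    · refine Eventually.of_forall fun n => Eventually.of_forall fun s hs => ?_
      have hs' := hsub' s hs
      have h1 := hmono s hs' _ _ le_rfl ((huS n).2 s hs').1 ((huS n).2 s hs').2
      have h2 := hmono s hs' _ _ ((huS n).2 s hs').1 ((huS n).2 s hs').2 le_rfl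
      rw [Real.norm_eq_abs, abs_le]
      have := neg_abs_le (F s (ζ s)); have := le_abs_self (F s (Z s))
      have := abs_nonneg (F s (ζ s)); have := abs_nonneg (F s (Z s))
      constructor <;> linarith
    · exact (hint _ hζS t (hIco t ht)).abs.add (hint _ hZS t (hIco t ht)).abs
    · refine Eventually.of_forall fun s hs => ?_
      have hs' := hsub' s hs
      have hc := hFc (s, z s) ⟨hs', (hζ0 s hs').trans (hzS.2 s hs').1⟩
      have : Tendsto (fun n => (s, u n s)) atTop (𝓝[Ico 0 b ×ˢ Ici 0] (s, z s)) := by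
        refine tendsto_nhdsWithin_iff.2 ⟨tendsto_const_nhds.prodMk_nhds (hlim s hs'), ?_⟩
        exact Eventually.of_forall fun n => ⟨hs', (hζ0 s hs').trans ((huS n).2 s hs').1⟩
      exact Tendsto.comp (g := Function.uncurry F) hc this
  have hTlim : ∀ θ ∈ Ico 0 b, Tendsto (fun n => T (u n) θ) atTop (𝓝 (T z θ)) := by
    intro θ hθ
    have hθ' : θ ∈ Icc 0 b := ⟨hθ.1, hθ.2.le⟩
    have hae : ∀ᵐ t : ℝ ∂volume, t ∈ uIoc θ b → t ∈ Ioo 0 b := by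
      filter_upwards [Measure.ae_ne volume b] with t htb ht
      rw [uIoc_of_le hθ.2.le] at ht
      exact ⟨hθ.1.trans_lt ht.1, lt_of_le_of_ne ht.2 htb⟩
    refine intervalIntegral.tendsto_integral_filter_of_dominated_convergence
      (fun s => |ζ' s| + |Z' s|) ?_ ?_ ?_ ?_
    · refine Eventually.of_forall fun n => ?_
      have := (hIii _ (huS n) θ hθ').aestronglyMeasurable
      rwa [uIoc_of_le hθ.2.le]
    · refine Eventually.of_forall fun n => ?_
      filter_upwards [hae] with t ht ht'
      have h1 := hIlow _ (huS n) t (ht ht')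
      have h2 := hIup _ (huS n) t (ht ht')
      rw [Real.norm_eq_abs, abs_le]
      have := le_abs_self (ζ' t); have := neg_abs_le (Z' t)
      have := abs_nonneg (ζ' t); have := abs_nonneg (Z' t)
      constructor <;> linarith
    · exact (hζc'.abs.add hZc'.abs).intervalIntegrable _ _
    · filter_upwards [hae] with t ht ht' using hIlim t (ht ht')
  have hfix : ∀ θ ∈ Ico 0 b, z θ = T z θ := by
    intro θ hθ
    refine tendsto_nhds_unique ((tendsto_add_atTop_iff_nat 1).2 (hlim θ hθ)) ?_
    have := hTlim θ hθ
    simpa only [hus] using this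
  have hzc : ContinuousOn z (Ico 0 b) := ((hTc z hzS).mono Ico_subset_Icc_self).congr hfix
  have hFz : ContinuousOn (fun s => F s (z s)) (Ico 0 b) := by
    have : ContinuousOn (fun s => (s, z s)) (Ico 0 b) := by fun_prop
    exact hFc.comp this fun s hs => ⟨hs, (hζ0 s hs).trans (hzS.2 s hs).1⟩
  refine ⟨z, hzc, hzS.2, ?_, ?_, ?_⟩
  rotate_left
  · intro t ht
    have hc := hFz.mono Ioo_subset_Ico_self
    exact intervalIntegral.integral_hasDerivAt_right (hint z hzS t (hIco t ht))
      (hc.stronglyMeasurableAtFilter isOpen_Ioo t ht) (hc.continuousAt (isOpen_Ioo.mem_nhds ht))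
  · have hb2 : b / 2 ∈ Ico 0 b := ⟨by linarith, by linarith⟩
    have := intervalIntegral.continuousOn_primitive_interval' (hint z hzS _ hb2) left_mem_uIcc
    rw [uIcc_of_le hb2.1] at this
    have h0 := this 0 ⟨le_rfl, hb2.1⟩
    have h1 : Tendsto (fun t => ∫ s in 0..t, F s (z s)) (𝓝[Icc 0 (b/2)] 0) (𝓝 0) := by
      simpa [ContinuousWithinAt] using h0
    refine h1.mono_left ?_
    have : 𝓝[>] (0:ℝ) = 𝓝[Ioc 0 (b/2)] 0 := (nhdsWithin_Ioc_eq_nhdsGT (by linarith)).symm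
    rw [this]
    exact nhdsWithin_mono _ Ioc_subset_Icc_self
  · intro t ht
    have h1 : HasDerivAt (T z) (-(I z t)) t := by
      refine intervalIntegral.integral_hasDerivAt_left (hIii z hzS t ⟨ht.1.le, ht.2.le⟩) ?_ ?_
      · exact (hIc z hzS).stronglyMeasurableAtFilter isOpen_Ioo t ht
      · exact (hIc z hzS).continuousAt (isOpen_Ioo.mem_nhds ht)
    refine h1.congr_of_eventuallyEq ?_
    filter_upwards [isOpen_Ioo.mem_nhds ht] with s hs using hfix s (hIco s hs)
end iter

lemma barrier_const (n : ℕ) {α l q : ℝ} (hα1 : 1 ≤ α) (hl : 0 < l) (hq : 1 < q) :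
    ∃ M : ℝ, 0 < M ∧ ∀ s ∈ Ico 0 (π/2),
      l - cos s ^ ((q-1)*α/2) * (M * exp (-l * cos s ^ 2)) ^ (q-1) ≤
        2*l*(α+1) * sin s ^ 2 - 2*l*(n+1) * cos s ^ 2 - 4*l^2 * cos s ^ 2 * sin s ^ 2 := by
  set Q : ℝ := 2*l*(α+1) + 2*l*(n+1) + 4*l^2 with hQ
  have hQ0 : 0 < Q := by positivity
  set x₀ : ℝ := √(3*l/Q) with hx0
  have hx0' : 0 < x₀ := by positivity
  set c₀ : ℝ := x₀ ^ ((q-1)*α/2) with hc0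
  have hc0' : 0 < c₀ := by positivity
  set Y : ℝ := ((l+Q)/c₀) ^ (1/(q-1)) with hY
  have hY0 : 0 < Y := by positivity
  have hYq : Y ^ (q-1) = (l+Q)/c₀ := by
    rw [hY, ← rpow_mul (by positivity)]
    rw [one_div, inv_mul_cancel₀ (by linarith), rpow_one]
  refine ⟨exp l * Y, by positivity, fun s hs => ?_⟩
  have hc : 0 < cos s := cos_pos_of_mem_Ioo ⟨by linarith [hs.1, pi_pos], hs.2⟩
  have hsc := sin_sq_add_cos_sq s
  have hRHS : 4*l - Q * cos s ^ 2 ≤ 2*l*(α+1) * sin s ^ 2 - 2*l*(n+1) * cos s ^ 2 - 4*l^2 * cos s ^ 2 * sin s ^ 2 := by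
    have h1 : sin s ^ 2 = 1 - cos s ^ 2 := by linarith
    rw [h1, hQ]
    nlinarith [sq_nonneg (l * cos s ^ 2), mul_le_mul_of_nonneg_left hα1 hl.le]
  refine le_trans ?_ hRHS
  have hpos : 0 ≤ cos s ^ ((q-1)*α/2) * (exp l * Y * exp (-l * cos s ^ 2)) ^ (q-1) := by positivity
  by_cases h : cos s ≤ x₀
  · have : cos s ^ 2 ≤ 3*l/Q := by
      rw [← Real.sq_sqrt (show 0 ≤ 3*l/Q by positivity)]
      exact pow_le_pow_left₀ hc.le h 2
    rw [le_div_iff₀ hQ0] at this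
    linarith
  · push Not at h
    have h1 : c₀ ≤ cos s ^ ((q-1)*α/2) :=
      rpow_le_rpow hx0'.le h.le (by have : 0 ≤ q - 1 := by linarith
                                    positivity)
    have h2 : Y ≤ exp l * Y * exp (-l * cos s ^ 2) := by
      have : exp l * Y * exp (-l * cos s ^ 2) = exp (l - l * cos s ^ 2) * Y := by
        rw [sub_eq_add_neg, exp_add]; ring_nf
      rw [this]
      have : 1 ≤ exp (l - l * cos s ^ 2) := one_le_exp (by nlinarith [sq_nonneg (sin s)])
      nlinarith
    have h3 : Y ^ (q-1) ≤ (exp l * Y * exp (-l * cos s ^ 2)) ^ (q-1) :=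
      rpow_le_rpow hY0.le h2 (by linarith)
    have h4 := mul_le_mul h1 h3 (by positivity) (by positivity)
    rw [hYq, mul_div_cancel₀ _ hc0'.ne'] at h4
    have : cos s ^ 2 ≤ 1 := by nlinarith [sq_nonneg (sin s)]
    nlinarith

/-- potential -/
noncomputable def zV (n m : ℕ) (α s : ℝ) : ℝ := m*(n+1) * cos s ^ 2 + m*(m+1-α) * sin s ^ 2

noncomputable def zF (n m : ℕ) (α l q s z : ℝ) : ℝ :=
  cos s ^ (α - m - 2) * sin s ^ n * ((zV n m α s + l * cos s ^ 2) * (z / cos s ^ m)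
    - cos s ^ 2 * cos s ^ ((q-1)*α/2) * (z / cos s ^ m) ^ q)

lemma zF_meas (n m : ℕ) (α l q : ℝ) : Measurable (Function.uncurry (zF n m α l q)) := by
  unfold Function.uncurry zF zV
  fun_prop

lemma zcos_pos {s : ℝ} (hs : s ∈ Ico 0 (π/2)) : 0 < cos s :=
  cos_pos_of_mem_Ioo ⟨by linarith [hs.1, pi_pos], hs.2⟩

lemma zF_cont (n m : ℕ) (α l q : ℝ) (hq : 1 < q) :
    ContinuousOn (Function.uncurry (zF n m α l q)) (Ico 0 (π/2) ×ˢ Ici 0) := by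
  unfold Function.uncurry zF zV
  have h : ∀ r : ℝ, ContinuousOn (fun p : ℝ × ℝ => cos p.1 ^ r) (Ico 0 (π/2) ×ˢ Ici 0) := by
    intro r
    refine ContinuousOn.rpow_const (by fun_prop) fun p hp => Or.inl (zcos_pos hp.1).ne'
  have h2 : ContinuousOn (fun p : ℝ × ℝ => p.2 / cos p.1 ^ m) (Ico 0 (π/2) ×ˢ Ici 0) :=
    ContinuousOn.div (by fun_prop) (by fun_prop) fun p hp => (pow_pos (zcos_pos hp.1) m).ne'
  have h3 : ContinuousOn (fun p : ℝ × ℝ => (p.2 / cos p.1 ^ m) ^ q) (Ico 0 (π/2) ×ˢ Ici 0) :=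
    h2.rpow_const fun p hp => Or.inr (by linarith)
  have h4 := h (α - m - 2)
  have h5 := h ((q-1)*α/2)
  fun_prop

lemma rpow_lip {q M x y : ℝ} (hq : 1 < q) (hx : 0 ≤ x) (hxy : x ≤ y) (hy : y ≤ M) :
    y ^ q - x ^ q ≤ q * M ^ (q-1) * (y - x) := by
  rcases hxy.eq_or_lt with rfl | hlt
  · simp
  obtain ⟨c, hc, h⟩ := exists_hasDerivAt_eq_slope (fun t : ℝ => t ^ q) (fun t => q * t ^ (q-1)) hlt
    (continuousOn_id.rpow_const fun t _ => Or.inr (by linarith))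
    (fun t ht => hasDerivAt_rpow_const (Or.inl (hx.trans_lt ht.1).ne'))
  rw [eq_div_iff (by linarith)] at h
  rw [← h]
  have : c ^ (q-1) ≤ M ^ (q-1) := rpow_le_rpow (hx.trans hc.1.le) (hc.2.le.trans hy) (by linarith)
  have h2 : 0 ≤ y - x := by linarith
  gcongr

lemma zF_mono (n m : ℕ) {α l q M : ℝ} (hα1 : 1 ≤ α) (hα2 : α < 2) (hl : 0 < l) (hq : 1 < q)
    (hm : q * M ^ (q-1) ≤ m) (hm2 : 2 ≤ m) {s : ℝ} (hs : s ∈ Ico 0 (π/2)) {x y : ℝ}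
    (hx : 0 ≤ x) (hxy : x ≤ y) (hy : y ≤ M * cos s ^ m) :
    zF n m α l q s x ≤ zF n m α l q s y := by
  have hc := zcos_pos hs
  have hs0 : 0 ≤ sin s := sin_nonneg_of_nonneg_of_le_pi hs.1 (by linarith [hs.2, pi_pos])
  unfold zF
  have hcm : 0 < cos s ^ m := by positivity
  set X := x / cos s ^ m
  set Y := y / cos s ^ m
  have hX : 0 ≤ X := by positivity
  have hXY : X ≤ Y := div_le_div_of_nonneg_right hxy hcm.le
  have hY : Y ≤ M := by rw [div_le_iff₀ hcm]; exact hy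
  have h1 := rpow_lip hq hX hXY hY
  have hc1 : cos s ^ ((q-1)*α/2) ≤ 1 := rpow_le_one hc.le (cos_le_one s) (by
    have : 0 ≤ q - 1 := by linarith
    positivity)
  have hc2 : 0 < cos s ^ ((q-1)*α/2) := by positivity
  refine mul_le_mul_of_nonneg_left ?_ (by positivity)
  have hm2' : (2:ℝ) ≤ m := by exact_mod_cast hm2
  have hV : m * cos s ^ 2 ≤ zV n m α s := by
    unfold zV
    have h1 : 0 ≤ (m:ℝ)*(m+1-α) * sin s ^ 2 := by
      have : 0 ≤ (m:ℝ)+1-α := by linarith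
      positivity
    have h2 : 0 ≤ (m:ℝ) * n * cos s ^ 2 := by positivity
    nlinarith
  have hd : 0 ≤ Y - X := by linarith
  have e1 : cos s ^ ((q-1)*α/2) * (Y ^ q - X ^ q) ≤ m * (Y - X) := by
    have hYX : 0 ≤ Y ^ q - X ^ q := sub_nonneg.2 (rpow_le_rpow hX hXY (by linarith))
    calc _ ≤ 1 * (Y ^ q - X ^ q) := by gcongr
      _ ≤ q * M ^ (q-1) * (Y - X) := by linarith
      _ ≤ _ := by gcongr
  have e2 : cos s ^ 2 * (cos s ^ ((q-1)*α/2) * (Y ^ q - X ^ q)) ≤ cos s ^ 2 * (m * (Y - X)) := by gcongr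
  have e3 : m * cos s ^ 2 * (Y - X) ≤ zV n m α s * (Y - X) := by gcongr
  have e4 : 0 ≤ l * cos s ^ 2 * (Y - X) := by positivity
  linarith

/-- derivative of the flux of a barrier. -/
lemma flux_deriv (n m : ℕ) (α : ℝ) {h k k' : ℝ → ℝ} (hh : ∀ s, HasDerivAt h (sin s * k s) s)
    (hk : ∀ s, HasDerivAt k (k' s) s) {s : ℝ} (hs : s ∈ Ico 0 (π/2)) :
    HasDerivAt (fun s => -(cos s ^ (α - m - 1) * sin s ^ (n+1) * (cos s * k s - m * h s)))
      (cos s ^ (α - m - 2) * sin s ^ n * (zV n m α s * h s +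
        (cos s * k s * (α * sin s ^ 2 - (n+1) * cos s ^ 2) - cos s ^ 2 * sin s * k' s))) s := by
  have hc := zcos_pos hs
  have h1 : HasDerivAt (fun s => cos s ^ (α - m - 1)) (-sin s * (α - m - 1) * cos s ^ (α - m - 1 - 1)) s :=
    (hasDerivAt_cos s).rpow_const (Or.inl hc.ne')
  have h2 : HasDerivAt (fun s => sin s ^ (n+1)) (((n+1 : ℕ) : ℝ) * sin s ^ n * cos s) s := by
    exact ((hasDerivAt_sin s).pow (n+1)).congr_deriv (by simp)
  have h3 : HasDerivAt (fun s => cos s * k s - m * h s)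
      (-sin s * k s + cos s * k' s - m * (sin s * k s)) s :=
    ((hasDerivAt_cos s).mul (hk s)).sub ((hh s).const_mul _)
  refine ((h1.mul h2).mul h3).neg.congr_deriv ?_
  simp only [Pi.mul_apply]
  have e : cos s ^ (α - m - 1) = cos s ^ (α - m - 2) * cos s := by
    rw [← rpow_add_one hc.ne']; ring_nf
  have e' : α - m - 1 - 1 = α - m - 2 := by ring
  rw [e, e']
  unfold zV
  push_cast
  ring

lemma flux_eq (n m : ℕ) (α : ℝ) {h k : ℝ → ℝ} {s : ℝ} (hs : s ∈ Ioo 0 (π/2)) (hm : 2 ≤ m) :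
    cos s ^ (α - 2*m) * sin s ^ n * (sin s * k s * cos s ^ m + h s * (m * cos s ^ (m-1) * (-sin s)))
     = (cos s ^ (α - m - 1) * sin s ^ (n+1) * (cos s * k s - m * h s)) := by
  have hc := zcos_pos (Ioo_subset_Ico_self hs)
  have e : cos s ^ (α - m - 1) = cos s ^ (α - 2*m) * cos s ^ (m-1) := by
    rw [← rpow_natCast, ← rpow_add hc]; congr 1
    rw [Nat.cast_sub (by omega)]; push_cast; ring
  have e2 : cos s ^ m = cos s ^ (m-1) * cos s := by
    rw [← pow_succ]; congr 1; omega
  rw [e, e2]; ring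

lemma barrier_flux (n m : ℕ) {α l q : ℝ} (hq : 1 < q) (hm2 : 2 ≤ m) (h k k' : ℝ → ℝ)
    (hh : ∀ s, HasDerivAt h (sin s * k s) s) (hk : ∀ s, HasDerivAt k (k' s) s)
    (hhc : Continuous h) (hkc : Continuous k) (hkc' : Continuous k') (hpos : ∀ s, 0 < h s)
    (t : ℝ) (ht : t ∈ Ioo 0 (π/2)) :
      (IntervalIntegrable (fun s => zF n m α l q s (h s * cos s ^ m)) volume 0 t) ∧
      (IntervalIntegrable (fun s => (cos s ^ (α - m - 2) * sin s ^ n * (zV n m α s * h s +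
        (cos s * k s * (α * sin s ^ 2 - (n+1) * cos s ^ 2) - cos s ^ 2 * sin s * k' s)))) volume 0 t) ∧
      ∫ s in 0..t, (cos s ^ (α - m - 2) * sin s ^ n * (zV n m α s * h s +
        (cos s * k s * (α * sin s ^ 2 - (n+1) * cos s ^ 2) - cos s ^ 2 * sin s * k' s))) =
      -(cos t ^ (α - 2*m) * sin t ^ n *
        (sin t * k t * cos t ^ m + h t * (m * cos t ^ (m-1) * (-sin t)))) := by
  have hsub : ∀ s ∈ uIcc 0 t, s ∈ Ico 0 (π/2) := by
    intro s hs; rw [uIcc_of_le ht.1.le] at hs; exact ⟨hs.1, hs.2.trans_lt ht.2⟩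
  have hC : ContinuousOn (fun s => cos s ^ (α - m - 2)) (uIcc 0 t) :=
    ContinuousOn.rpow_const (by fun_prop) fun s hs => Or.inl (zcos_pos (hsub s hs)).ne'
  have hI : IntervalIntegrable (fun s => (cos s ^ (α - m - 2) * sin s ^ n * (zV n m α s * h s +
      (cos s * k s * (α * sin s ^ 2 - (n+1) * cos s ^ 2) - cos s ^ 2 * sin s * k' s)))) volume 0 t := by
    refine ContinuousOn.intervalIntegrable ?_
    unfold zV
    fun_prop
  refine ⟨?_, hI, ?_⟩
  · refine ContinuousOn.intervalIntegrable ?_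
    have : ContinuousOn (fun s => (s, h s * cos s ^ m)) (uIcc 0 t) := by fun_prop
    have hmt : MapsTo (fun s => (s, h s * cos s ^ m)) (uIcc 0 t) (Ico 0 (π/2) ×ˢ Ici 0) := by
      intro s hs
      refine ⟨hsub s hs, ?_⟩
      have := zcos_pos (hsub s hs)
      have := hpos s
      exact mem_Ici.2 (by positivity)
    have h4 := (zF_cont n m α l q hq).comp this hmt
    exact h4
  · rw [intervalIntegral.integral_eq_sub_of_hasDerivAt
      (fun s hs => flux_deriv n m α hh hk (hsub s hs)) hI, flux_eq n m α ht hm2]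
    simp

lemma zonal_pre (n : ℕ) {α l q : ℝ} (hα1 : 1 ≤ α) (hα2 : α < 2) (hl : 0 < l) (hq : 1 < q) :
    ∃ (m : ℕ) (z : ℝ → ℝ) (ε M : ℝ), 2 ≤ m ∧ 0 < ε ∧ ContinuousOn z (Ico 0 (π/2)) ∧
      (∀ s ∈ Ico 0 (π/2), ε * cos s ^ m ≤ z s ∧ z s ≤ M * cos s ^ m) ∧
      (∀ t ∈ Ioo 0 (π/2), HasDerivAt z
        (-((∫ s in 0..t, zF n m α l q s (z s)) / (cos t ^ (α - 2*m) * sin t ^ n))) t) ∧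
      (∀ t ∈ Ioo 0 (π/2), HasDerivAt (fun t => ∫ s in 0..t, zF n m α l q s (z s)) (zF n m α l q t (z t)) t) ∧
      Tendsto (fun t => ∫ s in 0..t, zF n m α l q s (z s)) (𝓝[>] 0) (𝓝 0) := by
  obtain ⟨M, hM, hMb⟩ := barrier_const n hα1 hl hq
  obtain ⟨m, hm⟩ := exists_nat_ge (max 2 (q * M ^ (q-1)))
  have hm1 : q * M ^ (q-1) ≤ m := (le_max_right _ _).trans hm
  have hm2 : 2 ≤ m := by exact_mod_cast (le_max_left _ _).trans hm
  set ε : ℝ := min (l ^ (1/(q-1))) (M * exp (-l)) with hε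
  have hε0 : 0 < ε := by positivity
  have hεq : ε ^ (q-1) ≤ l := by
    calc ε ^ (q-1) ≤ (l ^ (1/(q-1))) ^ (q-1) := rpow_le_rpow hε0.le (min_le_left _ _) (by linarith)
      _ = l := by rw [← rpow_mul hl.le, one_div, inv_mul_cancel₀ (by linarith), rpow_one]
  set g : ℝ → ℝ := fun s => M * exp (-l * cos s ^ 2) with hg
  have hg0 : ∀ s, 0 < g s := fun s => by positivity
  have hεg : ∀ s, ε ≤ g s := by
    intro s
    refine (min_le_right _ _).trans (mul_le_mul_of_nonneg_left (exp_le_exp.2 ?_) hM.le)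
    have : cos s ^ 2 ≤ 1 := by nlinarith [sq_nonneg (sin s), sin_sq_add_cos_sq s]
    nlinarith
  have hgM : ∀ s, g s ≤ M := by
    intro s
    have : exp (-l * cos s ^ 2) ≤ 1 := exp_le_one_iff.2 (by nlinarith [sq_nonneg (cos s)])
    simp only [hg]; nlinarith
  set kg : ℝ → ℝ := fun s => 2 * l * cos s * g s with hkg
  have hgd : ∀ s, HasDerivAt g (sin s * kg s) s := by
    intro s
    have := ((((hasDerivAt_cos s).pow 2).const_mul (-l)).exp).const_mul M
    refine this.congr_deriv ?_
    simp only [hkg, hg, Pi.pow_apply]; push_cast; ring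
  set kg' : ℝ → ℝ := fun s => -(2 * l * sin s) * g s + 2 * l * cos s * (sin s * kg s) with hkg'
  have hkgd : ∀ s, HasDerivAt kg (kg' s) s := by
    intro s
    refine (((hasDerivAt_cos s).const_mul (2*l)).mul (hgd s)).congr_deriv ?_
    simp only [hkg']; ring
  have hgc : Continuous g := by simp only [hg]; fun_prop
  have hkgc : Continuous kg := by simp only [hkg]; fun_prop
  have hkgc' : Continuous kg' := by simp only [hkg']; fun_prop
  have hb : (0:ℝ) < π/2 := by positivity
  have hone : ∀ s, HasDerivAt (fun _ : ℝ => ε) (sin s * (fun _ : ℝ => (0:ℝ)) s) s := by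
    intro s; simpa using hasDerivAt_const s ε
  have hbd : ∀ h k : ℝ → ℝ, (∀ s, HasDerivAt h (sin s * k s) s) → ∀ s,
      HasDerivAt (fun s => h s * cos s ^ m) (sin s * k s * cos s ^ m + h s * (m * cos s ^ (m-1) * (-sin s))) s := by
    intro h k hh s
    exact (hh s).mul ((hasDerivAt_cos s).pow m)
  have hsub : ∀ t ∈ Ioo 0 (π/2), -(cos t ^ (α - 2*m) * sin t ^ n * (sin t * 0 * cos t ^ m + ε * (m * cos t ^ (m-1) * (-sin t))))
      ≤ ∫ s in 0..t, zF n m α l q s (ε * cos s ^ m) := by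
    intro t ht
    obtain ⟨i1, i2, i3⟩ := barrier_flux n m (α := α) (l := l) hq hm2 (fun _ => ε) (fun _ => 0) (fun _ => 0) hone (fun s => hasDerivAt_const s 0)
      (by fun_prop) (by fun_prop) (by fun_prop) (fun _ => hε0) t ht
    rw [← i3]
    refine intervalIntegral.integral_mono_on ht.1.le i2 i1 ?_
    intro s hs
    have hs' : s ∈ Ico 0 (π/2) := ⟨hs.1, hs.2.trans_lt ht.2⟩
    have hc := zcos_pos hs'
    have hs0 : 0 ≤ sin s := sin_nonneg_of_nonneg_of_le_pi hs.1 (by linarith [hs'.2, pi_pos])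
    unfold zF
    refine mul_le_mul_of_nonneg_left ?_ (by positivity)
    rw [mul_div_cancel_right₀ _ (pow_pos hc m).ne']
    have e : ε ^ q = ε ^ (q-1) * ε := by rw [← rpow_add_one hε0.ne']; ring_nf
    rw [e]
    have hc1 : cos s ^ ((q-1)*α/2) ≤ 1 := rpow_le_one hc.le (cos_le_one s) (by
      have : 0 ≤ q - 1 := by linarith
      positivity)
    have hc2 : 0 < cos s ^ ((q-1)*α/2) := by positivity
    have h5 : cos s ^ ((q-1)*α/2) * ε ^ (q-1) ≤ 1 * l := by gcongr
    have h6 : 0 ≤ cos s ^ 2 * ε * (l - cos s ^ ((q-1)*α/2) * ε ^ (q-1)) :=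
      mul_nonneg (by positivity) (by linarith)
    linarith
  have hsup : ∀ t ∈ Ioo 0 (π/2), (∫ s in 0..t, zF n m α l q s (g s * cos s ^ m)) ≤
      -(cos t ^ (α - 2*m) * sin t ^ n * (sin t * kg t * cos t ^ m + g t * (m * cos t ^ (m-1) * (-sin t)))) := by
    intro t ht
    obtain ⟨i1, i2, i3⟩ := barrier_flux n m (α := α) (l := l) hq hm2 g kg kg' hgd hkgd hgc hkgc hkgc' hg0 t ht
    rw [← i3]
    refine intervalIntegral.integral_mono_on ht.1.le i1 i2 ?_
    intro s hs
    have hs' : s ∈ Ico 0 (π/2) := ⟨hs.1, hs.2.trans_lt ht.2⟩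
    have hc := zcos_pos hs'
    have hs0 : 0 ≤ sin s := sin_nonneg_of_nonneg_of_le_pi hs.1 (by linarith [hs'.2, pi_pos])
    unfold zF
    refine mul_le_mul_of_nonneg_left ?_ (by positivity)
    rw [mul_div_cancel_right₀ _ (pow_pos hc m).ne']
    have e : g s ^ q = g s ^ (q-1) * g s := by rw [← rpow_add_one (hg0 s).ne']; ring_nf
    rw [e]
    have h5 := hMb s hs'
    have h6 := mul_le_mul_of_nonneg_left h5 (show 0 ≤ cos s ^ 2 * g s by have := hg0 s; positivity)
    simp only [hkg', hkg]
    change _ * (l - _ * g s ^ (q-1)) ≤ _ at h6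
    linarith
  obtain ⟨z, hzc, hzb, hzd, hGd, hG0⟩ := iter_exists hb (a := fun s => cos s ^ (α - 2*m) * sin s ^ n)
    (F := zF n m α l q) (ζ := fun s => ε * cos s ^ m) (Z := fun s => g s * cos s ^ m)
    (ζ' := fun s => sin s * 0 * cos s ^ m + ε * (m * cos s ^ (m-1) * (-sin s)))
    (Z' := fun s => sin s * kg s * cos s ^ m + g s * (m * cos s ^ (m-1) * (-sin s)))
    (by
      refine ContinuousOn.mul ?_ (by fun_prop)
      exact ContinuousOn.rpow_const (by fun_prop) fun s hs => Or.inl (zcos_pos (Ioo_subset_Ico_self hs)).ne')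
    (by
      intro s hs
      have := zcos_pos (Ioo_subset_Ico_self hs)
      have := sin_pos_of_pos_of_lt_pi hs.1 (by linarith [hs.2, pi_pos])
      positivity)
    (zF_meas n m α l q) (zF_cont n m α l q hq)
    (by intro s hs; have := zcos_pos hs; positivity)
    (by intro s hs; have := zcos_pos hs
        exact mul_le_mul_of_nonneg_right (hεg s) (by positivity))
    (hbd (fun _ => ε) (fun _ => 0) hone) (hbd g kg hgd) (by fun_prop) (by fun_prop)
    (by simp only [cos_pi_div_two]; rw [zero_pow (by omega)]; simp)
    (by simp only [cos_pi_div_two]; rw [zero_pow (by omega)]; simp)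
    (by
      intro s hs x y hx hxy hy
      have hc := zcos_pos hs
      refine zF_mono n m hα1 hα2 hl hq hm1 hm2 hs (le_trans (by positivity) hx) hxy (hy.trans ?_)
      exact mul_le_mul_of_nonneg_right (hgM s) (by positivity))
    hsub hsup
  refine ⟨m, z, ε, M, hm2, hε0, hzc, fun s hs => ⟨(hzb s hs).1, (hzb s hs).2.trans ?_⟩, hzd, hGd, hG0⟩
  exact mul_le_mul_of_nonneg_right (hgM s) (pow_pos (zcos_pos hs) m).le

lemma zonal_solution (n : ℕ) {α l q : ℝ} (hα1 : 1 ≤ α) (hα2 : α < 2) (hl : 0 < l) (hq : 1 < q) :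
    ∃ (w P : ℝ → ℝ) (ε M : ℝ), 0 < ε ∧ (∀ θ ∈ Ioo 0 (π/2), ε ≤ w θ ∧ w θ ≤ M) ∧
      (∀ θ ∈ Ioo 0 (π/2), HasDerivAt w (P θ / (cos θ ^ α * sin θ ^ n)) θ) ∧
      (∀ θ ∈ Ioo 0 (π/2), HasDerivAt P
        (-(cos θ ^ α * sin θ ^ n * (l * w θ - cos θ ^ ((q-1)*α/2) * w θ ^ q))) θ) ∧
      Tendsto P (𝓝[>] 0) (𝓝 0) := by
  obtain ⟨m, z, ε, M, hm2, hε0, hzc, hzb, hzd, hGd, hG0⟩ := zonal_pre n hα1 hα2 hl hq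
  have hb : (0:ℝ) < π/2 := by positivity
  set G : ℝ → ℝ := fun t => ∫ s in 0..t, zF n m α l q s (z s) with hG
  refine ⟨fun s => z s / cos s ^ m,
    fun s => -(cos s ^ m * G s) + m * (cos s ^ (α - m - 1) * sin s ^ (n+1)) * z s, ε, M, hε0, ?_, ?_, ?_, ?_⟩
  · intro s hs
    have hs' := Ioo_subset_Ico_self hs
    have hc := pow_pos (zcos_pos hs') m
    obtain ⟨h1, h2⟩ := hzb s hs'
    simp only
    rw [le_div_iff₀ hc, div_le_iff₀ hc]
    exact ⟨h1, h2⟩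
  · intro s hs
    have hc := zcos_pos (Ioo_subset_Ico_self hs)
    have hsn := sin_pos_of_pos_of_lt_pi hs.1 (by linarith [hs.2, pi_pos])
    refine ((hzd s hs).div ((hasDerivAt_cos s).pow m) (pow_pos hc m).ne').congr_deriv ?_
    change (-(G s / _) * _ - _) / _ = _
    obtain ⟨j, rfl⟩ : ∃ j, m = j + 1 := ⟨m-1, by omega⟩
    have e1 : cos s ^ α = cos s ^ (α - 2 * ((j+1 : ℕ):ℝ)) * cos s ^ (2*(j+1)) := by
      rw [← rpow_natCast, ← rpow_add hc]; congr 1; push_cast; ring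
    have e2 : cos s ^ (α - ((j+1 : ℕ):ℝ) - 1) = cos s ^ (α - 2 * ((j+1 : ℕ):ℝ)) * cos s ^ j := by
      rw [← rpow_natCast, ← rpow_add hc]; congr 1; push_cast; ring
    beta_reduce
    rw [e1, e2]
    have : 0 < cos s ^ (α - 2 * ((j+1 : ℕ):ℝ)) := by positivity
    set C := cos s ^ (α - 2 * ((j+1 : ℕ):ℝ))
    simp only [Nat.add_sub_cancel, Pi.pow_apply]
    field_simp
    ring
  · intro s hs
    have hs' := Ioo_subset_Ico_self hs
    have hc := zcos_pos hs'
    have hsn := sin_pos_of_pos_of_lt_pi hs.1 (by linarith [hs.2, pi_pos])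
    have h1 := (((hasDerivAt_cos s).pow m).mul (hGd s hs)).neg
    have h2 := (((hasDerivAt_cos s).rpow_const (p := α - m - 1) (Or.inl hc.ne')).mul
      ((hasDerivAt_sin s).pow (n+1))).const_mul (m:ℝ)
    have h3 := h1.add (h2.mul (hzd s hs))
    refine h3.congr_deriv ?_
    change -((m * cos s ^ (m-1) * -sin s) * G s + cos s ^ m * zF n m α l q s (z s)) +
      (m * ((-sin s * (α - m - 1) * cos s ^ (α - m - 1 - 1)) * sin s ^ (n+1)
        + cos s ^ (α - m - 1) * (((n+1 : ℕ):ℝ) * sin s ^ n * cos s)) * z s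
        + m * (cos s ^ (α - m - 1) * sin s ^ (n+1)) * (-(G s / (cos s ^ (α - 2*m) * sin s ^ n)))) = _
    obtain ⟨j, rfl⟩ : ∃ j, m = j + 1 := ⟨m-1, by omega⟩
    have e1 : cos s ^ α = cos s ^ (α - ((j+1 : ℕ):ℝ) - 2) * cos s ^ (j+3) := by
      rw [← rpow_natCast, ← rpow_add hc]; congr 1; push_cast; ring
    have e2 : cos s ^ (α - ((j+1 : ℕ):ℝ) - 1) = cos s ^ (α - ((j+1 : ℕ):ℝ) - 2) * cos s := by
      rw [← rpow_add_one hc.ne']; congr 1; push_cast; ring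
    have e3 : α - ((j+1 : ℕ):ℝ) - 1 - 1 = α - ((j+1 : ℕ):ℝ) - 2 := by ring
    have e4 : cos s ^ (α - 2 * ((j+1 : ℕ):ℝ)) = cos s ^ (α - ((j+1 : ℕ):ℝ) - 2) * cos s / cos s ^ j := by
      rw [eq_div_iff (by positivity), ← rpow_add_one hc.ne', ← rpow_natCast, ← rpow_add hc]
      congr 1; push_cast; ring
    unfold zF zV
    beta_reduce
    rw [e3, e1, e2, e4]
    have : 0 < cos s ^ (α - ((j+1 : ℕ):ℝ) - 2) := by positivity
    set C := cos s ^ (α - ((j+1 : ℕ):ℝ) - 2)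
    have hz : z s = cos s ^ (j+1) * (z s / cos s ^ (j+1)) := by field_simp
    set W := z s / cos s ^ (j+1)
    rw [hz]
    simp only [Nat.add_sub_cancel]
    set Wq := W ^ q
    set c := cos s ^ ((q-1)*α/2)
    push_cast
    field_simp
    ring
  · have hz0 : Tendsto z (𝓝[>] 0) (𝓝 (z 0)) := by
      have h0 := hzc 0 ⟨le_rfl, hb⟩
      rw [← nhdsWithin_Ioo_eq_nhdsGT hb]
      exact h0.mono_left (nhdsWithin_mono _ Ioo_subset_Ico_self)
    have h1 : Tendsto (fun s : ℝ => cos s ^ m) (𝓝[>] 0) (𝓝 (cos 0 ^ m)) :=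
      (Continuous.tendsto (by fun_prop) 0).mono_left nhdsWithin_le_nhds
    have h2 : Tendsto (fun s : ℝ => m * (cos s ^ (α - m - 1) * sin s ^ (n+1))) (𝓝[>] 0)
        (𝓝 (m * (cos 0 ^ (α - m - 1) * sin 0 ^ (n+1)))) := by
      refine Tendsto.mono_left (ContinuousAt.tendsto ?_) nhdsWithin_le_nhds
      have : ContinuousAt (fun s : ℝ => cos s ^ (α - m - 1)) 0 :=
        ContinuousAt.rpow_const (by fun_prop) (Or.inl (by simp))
      fun_prop
    have := ((h1.mul hG0).neg).add (h2.mul hz0)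
    simpa using this


lemma no_blowup {u u' : ℝ → ℝ} {t₀ b δ M : ℝ} (ht : t₀ < b) (hδ : 0 < δ)
    (hu : ∀ s ∈ Ico t₀ b, HasDerivAt u (u' s) s) (hu' : ∀ s ∈ Ico t₀ b, δ / (b - s) ≤ u' s)
    (hM : ∀ s ∈ Ico t₀ b, |u s| ≤ M) : False := by
  have hd : ∀ s ∈ Ico t₀ b, HasDerivAt (fun s => u s + δ * log (b - s)) (u' s + δ * (-1 / (b - s))) s := by
    intro s hs
    have h1 : HasDerivAt (fun s => b - s) (-1) s := by simpa using (hasDerivAt_id s).const_sub b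
    exact (hu s hs).add ((h1.log (by have := hs.2; linarith [sub_pos.2 hs.2])).const_mul δ)
  have hmono : MonotoneOn (fun s => u s + δ * log (b - s)) (Ico t₀ b) := by
    refine monotoneOn_of_deriv_nonneg (convex_Ico _ _)
      (fun s hs => (hd s hs).continuousAt.continuousWithinAt)
      (fun s hs => (hd s (interior_subset hs)).differentiableAt.differentiableWithinAt) ?_
    intro s hs
    have hs := interior_subset hs
    rw [(hd s hs).deriv]
    have := hu' s hs
    have e : δ * (-1 / (b - s)) = -(δ / (b - s)) := by ring
    rw [e]; linarith
  have hlog : Tendsto (fun s => log (b - s)) (𝓝[<] b) atBot := by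
    refine tendsto_log_nhdsGT_zero.comp ?_
    refine tendsto_nhdsWithin_iff.2 ⟨?_, ?_⟩
    · have : Tendsto (fun s => b - s) (𝓝 b) (𝓝 (b - b)) := Continuous.tendsto (by fun_prop) b
      rw [sub_self] at this
      exact this.mono_left nhdsWithin_le_nhds
    · filter_upwards [self_mem_nhdsWithin] with s hs using mem_Ioi.2 (sub_pos.2 (mem_Iio.1 hs))
  have h1 := hlog.eventually (eventually_lt_atBot ((u t₀ + δ * log (b - t₀) - M) / δ))
  have h2 : ∀ᶠ s in 𝓝[<] b, s ∈ Ico t₀ b := by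
    filter_upwards [Ioo_mem_nhdsLT ht] with s hs using ⟨hs.1.le, hs.2⟩
  obtain ⟨s, hs1, hs2⟩ := (h1.and h2).exists
  rw [lt_div_iff₀ hδ] at hs1
  have h3 := hmono ⟨le_rfl, ht⟩ hs2 hs2.1
  have h4 := (abs_le.1 (hM s hs2)).2
  simp only at h3
  linarith

lemma exists_small {g : ℝ → ℝ} {b η : ℝ} (hη : 0 < η) (hηb : η ≤ b) 
    (hgi : IntegrableOn g (Ioo 0 b)) : ∃ x ∈ Ioo 0 η, x * g x < η := by
  by_contra! h
  have h1 : IntegrableOn (fun x : ℝ => η * x⁻¹) (Ioo 0 η) := by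
    refine Integrable.mono' (hgi.mono_set (Ioo_subset_Ioo_right hηb)) ?_ ?_
    · exact Measurable.aestronglyMeasurable (by fun_prop)
    · filter_upwards [ae_restrict_mem measurableSet_Ioo] with x hx
      have h2 := h x hx
      have hx0 := hx.1
      rw [Real.norm_eq_abs, abs_of_nonneg (by positivity), ← div_eq_mul_inv, div_le_iff₀ hx0]
      linarith
  have h2 : IntegrableOn (fun x : ℝ => x⁻¹) (Ioo 0 η) := by
    have := h1.const_mul η⁻¹
    refine this.congr (Eventually.of_forall fun x => ?_)
    simp only; rw [← mul_assoc, inv_mul_cancel₀ hη.ne', one_mul]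
  rw [← intervalIntegrable_iff_integrableOn_Ioo_of_le hη.le, intervalIntegrable_inv_iff] at h2
  rcases h2 with h2 | h2
  · linarith
  · exact h2 left_mem_uIcc

lemma exists_small' {g : ℝ → ℝ} {b η : ℝ} (hη : 0 < η) (hηb : η ≤ b) 
    (hgi : IntegrableOn g (Ioo 0 b)) : ∃ y ∈ Ioo (b - η) b, (b - y) * g y < η := by
  have hb : 0 < b := hη.trans_le hηb
  have h1 : IntegrableOn (fun x => g (b - x)) (Ioo 0 b) := by
    rw [← intervalIntegrable_iff_integrableOn_Ioo_of_le hb.le] at hgi ⊢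
    have := (hgi.comp_sub_left b).symm
    simpa using this
  obtain ⟨x, hx, h⟩ := exists_small hη hηb h1
  refine ⟨b - x, ⟨by linarith [hx.2], by linarith [hx.1]⟩, ?_⟩
  simpa using h

lemma nonneg_of_flux {b C : ℝ} (hb : 0 < b) (hC : 0 ≤ C) {f g B B' : ℝ → ℝ}
    (hf : IntegrableOn f (Ioo 0 b)) (hg : IntegrableOn g (Ioo 0 b))
    (hg0 : ∀ t ∈ Ioo 0 b, 0 ≤ g t)
    (hB : ∀ t ∈ Ioo 0 b, HasDerivAt B (B' t) t) (hB' : ContinuousOn B' (Ioo 0 b))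
    (hle : ∀ t ∈ Ioo 0 b, B' t ≤ f t)
    (hbd : ∀ t ∈ Ioo 0 b, |B t| ≤ C * min t (b - t) * g t) : 0 ≤ ∫ t in Ioo 0 b, f t := by
  have hη : ∀ k : ℕ, 0 < b / 2 / (k + 1) ∧ b / 2 / (k+1) ≤ b / 2 := by
    intro k
    refine ⟨by positivity, div_le_self (by positivity) ?_⟩
    have : (0:ℝ) ≤ k := by positivity
    linarith
  choose x hx hxs using fun k => exists_small (hη k).1 ((hη k).2.trans (by linarith)) hg
  choose y hy hys using fun k => exists_small' (hη k).1 ((hη k).2.trans (by linarith)) hg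
  have hη0 : Tendsto (fun k : ℕ => b / 2 / ((k:ℝ) + 1)) atTop (𝓝 0) := by
    have := (tendsto_one_div_add_atTop_nhds_zero_nat (𝕜 := ℝ)).const_mul (b/2)
    simpa [div_eq_mul_inv] using this
  have hxI : ∀ k, x k ∈ Ioo 0 b := fun k => ⟨(hx k).1, by linarith [(hx k).2, (hη k).2]⟩
  have hyI : ∀ k, y k ∈ Ioo 0 b := fun k => ⟨by linarith [(hy k).1, (hη k).2], (hy k).2⟩
  have hxy : ∀ k, x k ≤ y k := fun k => by linarith [(hx k).2, (hη k).2, (hy k).1]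
  have hx0 : Tendsto x atTop (𝓝 0) :=
    squeeze_zero (fun k => (hx k).1.le) (fun k => (hx k).2.le) hη0
  have hyb : Tendsto y atTop (𝓝 b) := by
    have h1 : Tendsto (fun k : ℕ => b - b / 2 / ((k:ℝ) + 1)) atTop (𝓝 b) := by
      simpa using hη0.const_sub b
    exact tendsto_of_tendsto_of_tendsto_of_le_of_le h1 tendsto_const_nhds
      (fun k => (hy k).1.le) (fun k => (hy k).2.le)
  have hfi : IntervalIntegrable f volume 0 b := by
    rwa [intervalIntegrable_iff_integrableOn_Ioo_of_le hb.le]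
  have hH := intervalIntegral.continuousOn_primitive_interval' hfi left_mem_uIcc
  rw [uIcc_of_le hb.le] at hH
  have hHx : Tendsto (fun k => ∫ t in 0..x k, f t) atTop (𝓝 (∫ t in 0..0, f t)) :=
    (hH 0 ⟨le_rfl, hb.le⟩).tendsto.comp
      (tendsto_nhdsWithin_iff.2 ⟨hx0, Eventually.of_forall fun k => Ioo_subset_Icc_self (hxI k)⟩)
  have hHy : Tendsto (fun k => ∫ t in 0..y k, f t) atTop (𝓝 (∫ t in 0..b, f t)) :=
    (hH b ⟨hb.le, le_rfl⟩).tendsto.comp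
      (tendsto_nhdsWithin_iff.2 ⟨hyb, Eventually.of_forall fun k => Ioo_subset_Icc_self (hyI k)⟩)
  have hlim := hHy.sub hHx
  rw [intervalIntegral.integral_same, sub_zero] at hlim
  rw [← integral_Ioc_eq_integral_Ioo, ← intervalIntegral.integral_of_le hb.le]
  have hlow : Tendsto (fun k : ℕ => -(C * (b / 2 / ((k:ℝ) + 1))) - C * (b / 2 / ((k:ℝ) + 1))) atTop (𝓝 0) := by
    have := ((hη0.const_mul C).neg).sub (hη0.const_mul C)
    simpa using this
  refine le_of_tendsto_of_tendsto' hlow hlim fun k => ?_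
  have hsub : ∀ t ∈ Icc (x k) (y k), t ∈ Ioo 0 b :=
    fun t ht => ⟨(hxI k).1.trans_le ht.1, ht.2.trans_lt (hyI k).2⟩
  have hi : ∀ t ∈ Ioo 0 b, IntervalIntegrable f volume 0 t := by
    intro t ht
    refine hfi.mono_set ?_
    rw [uIcc_of_le ht.1.le, uIcc_of_le hb.le]
    exact Icc_subset_Icc_right ht.2.le
  rw [intervalIntegral.integral_interval_sub_left (hi _ (hyI k)) (hi _ (hxI k))]
  have hB'i : IntervalIntegrable B' volume (x k) (y k) := by
    refine ContinuousOn.intervalIntegrable ?_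
    rw [uIcc_of_le (hxy k)]
    exact hB'.mono hsub
  have hFTC : ∫ t in x k..y k, B' t = B (y k) - B (x k) := by
    refine intervalIntegral.integral_eq_sub_of_hasDerivAt ?_ hB'i
    intro t ht
    rw [uIcc_of_le (hxy k)] at ht
    exact hB t (hsub t ht)
  have hmono : ∫ t in x k..y k, B' t ≤ ∫ t in x k..y k, f t :=
    intervalIntegral.integral_mono_on (hxy k) hB'i ((hi _ (hxI k)).symm.trans (hi _ (hyI k)))
      fun t ht => hle t (hsub t ht)
  have e1 : |B (x k)| ≤ C * (b / 2 / ((k:ℝ) + 1)) := by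
    refine (hbd _ (hxI k)).trans ?_
    rw [mul_assoc]
    refine mul_le_mul_of_nonneg_left (le_trans ?_ (hxs k).le) hC
    exact mul_le_mul_of_nonneg_right (min_le_left _ _) (hg0 _ (hxI k))
  have e2 : |B (y k)| ≤ C * (b / 2 / ((k:ℝ) + 1)) := by
    refine (hbd _ (hyI k)).trans ?_
    rw [mul_assoc]
    refine mul_le_mul_of_nonneg_left (le_trans ?_ (hys k).le) hC
    exact mul_le_mul_of_nonneg_right (min_le_right _ _) (hg0 _ (hyI k))
  have := (abs_le.1 e1).2
  have := (abs_le.1 e2).1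
  linarith

lemma young_q {q u u₀ : ℝ} (hq : 1 < q) (hu0 : 0 < u₀) :
    u₀ ^ (q-1) * u ^ 2 ≤ 2/(q+1) * |u| ^ (q+1) + (q-1)/(q+1) * u₀ ^ (q+1) := by
  have hq' : 0 < q + 1 := by linarith
  have h := Real.geom_mean_le_arith_mean2_weighted (w₁ := 2/(q+1)) (w₂ := (q-1)/(q+1))
    (p₁ := |u| ^ (q+1)) (p₂ := u₀ ^ (q+1)) (by positivity) (div_nonneg (by linarith) hq'.le)
    (by positivity) (by positivity) (by field_simp; ring)
  rw [← rpow_mul (abs_nonneg u), ← rpow_mul hu0.le, mul_div_cancel₀ _ hq'.ne', mul_div_cancel₀ _ hq'.ne'] at h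
  have e : |u| ^ (2:ℝ) = u ^ 2 := by rw [rpow_two, sq_abs]
  rw [e] at h
  linarith

lemma picone_pt {q p c l u u₀ d P : ℝ} (hq : 1 < q) (hp : 0 < p) (hc : 0 < c) (hu0 : 0 < u₀) :
    -(p * (l * u₀ - c * u₀ ^ q)) * (u^2 / u₀) + P * (2 * u * d / u₀ - u^2 * (P / p) / u₀^2) ≤
      (d^2 - l * u^2 + 2/(q+1) * c * |u| ^ (q+1)) * p + (q-1)/(q+1) * p * c * u₀ ^ (q+1) := by
  have h1 := young_q (u := u) hq hu0
  have h2 := mul_le_mul_of_nonneg_left h1 (mul_pos hp hc).le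
  have e : u₀ ^ q = u₀ ^ (q-1) * u₀ := by rw [← rpow_add_one hu0.ne']; ring_nf
  rw [e]
  have h3 : 0 ≤ p * (d - u * P / (p * u₀)) ^ 2 := by positivity
  have e3 : p * (d - u * P / (p * u₀)) ^ 2 = p * d^2 - P * (2 * u * d / u₀ - u^2 * (P / p) / u₀^2) := by
    field_simp; ring
  have e4 : -(p * (l * u₀ - c * (u₀ ^ (q-1) * u₀))) * (u^2 / u₀) = -(p * l * u^2) + p * c * (u₀ ^ (q-1) * u^2) := by
    field_simp; ring
  rw [e4]
  linarith

lemma flux_bound (n : ℕ) {α l q : ℝ} (hα1 : 1 ≤ α) (hl : 0 < l) (hq : 1 < q) {w P : ℝ → ℝ} {ε M : ℝ}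
    (hε : 0 < ε) (hwb : ∀ θ ∈ Ioo 0 (π/2), ε ≤ w θ ∧ w θ ≤ M)
    (hw : ∀ θ ∈ Ioo 0 (π/2), HasDerivAt w (P θ / (cos θ ^ α * sin θ ^ n)) θ)
    (hP : ∀ θ ∈ Ioo 0 (π/2), HasDerivAt P
        (-(cos θ ^ α * sin θ ^ n * (l * w θ - cos θ ^ ((q-1)*α/2) * w θ ^ q))) θ)
    (hP0 : Tendsto P (𝓝[>] 0) (𝓝 0)) :
    ∃ C, 0 ≤ C ∧ ∀ t ∈ Ioo 0 (π/2), |P t| ≤ C * min t (π/2 - t) * (cos t ^ α * sin t ^ n) := by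
  have hpi := pi_pos
  have hcp : ∀ t ∈ Ioo 0 (π/2), 0 < cos t := fun t ht => cos_pos_of_mem_Ioo ⟨by linarith [ht.1], ht.2⟩
  have hsp : ∀ t ∈ Ioo 0 (π/2), 0 < sin t := fun t ht => sin_pos_of_pos_of_lt_pi ht.1 (by linarith [ht.2])
  have hM : 0 < M := by
    have := hwb (π/4) ⟨by linarith, by linarith⟩; linarith
  set C₀ : ℝ := l * M + M ^ q with hC0
  have hC0' : 0 < C₀ := by positivity
  have hPb : ∀ t ∈ Ioo 0 (π/2), ‖-(cos t ^ α * sin t ^ n * (l * w t - cos t ^ ((q-1)*α/2) * w t ^ q))‖ ≤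
      C₀ * (cos t ^ α * sin t ^ n) := by
    intro t ht
    have hc := hcp t ht
    have hs := hsp t ht
    obtain ⟨h1, h2⟩ := hwb t ht
    have hw0 : 0 < w t := by linarith
    rw [norm_neg, norm_mul, Real.norm_eq_abs, abs_of_pos (by positivity), mul_comm]
    refine mul_le_mul_of_nonneg_right ?_ (by positivity)
    have hc1 : cos t ^ ((q-1)*α/2) ≤ 1 := rpow_le_one hc.le (cos_le_one t) (by
      have : 0 ≤ q - 1 := by linarith
      positivity)
    have hc2 : 0 < cos t ^ ((q-1)*α/2) := by positivity
    have h3 : w t ^ q ≤ M ^ q := rpow_le_rpow hw0.le h2 (by linarith)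
    have h4 : 0 < w t ^ q := by positivity
    have h5 : cos t ^ ((q-1)*α/2) * w t ^ q ≤ 1 * M ^ q := by gcongr
    have h6 : l * w t ≤ l * M := by gcongr
    have h7 : 0 < l * w t := by positivity
    have h8 : 0 < cos t ^ ((q-1)*α/2) * w t ^ q := by positivity
    have h9 : 0 < M ^ q := by positivity
    rw [Real.norm_eq_abs, abs_le]
    constructor <;> nlinarith
  have h4 : (π/4) ∈ Ioo 0 (π/2) := ⟨by linarith, by linarith⟩
  set K : ℝ := (cos (π/4) ^ α * sin (π/4) ^ n)⁻¹ with hK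
  have hc4 := hcp _ h4
  have hs4 := hsp _ h4
  have hK0 : 0 < K := by positivity
  have hK1 : K * (cos (π/4) ^ α * sin (π/4) ^ n) = 1 := inv_mul_cancel₀ (by positivity)
  have hcle : ∀ t ∈ Ioo 0 (π/2), cos t ^ α ≤ 1 := fun t ht =>
    rpow_le_one (hcp t ht).le (cos_le_one t) (by linarith)
  have hsle : ∀ t ∈ Ioo 0 (π/2), sin t ^ n ≤ 1 := fun t ht =>
    pow_le_one₀ (hsp t ht).le (sin_le_one t)
  have hqm1 : ∀ s ∈ Ioo 0 (π/2), ∀ t ∈ Ioo 0 (π/2), s ≤ t → t ≤ π/4 →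
      cos s ^ α * sin s ^ n ≤ K * (cos t ^ α * sin t ^ n) := by
    intro s hs t ht hst ht4
    have a1 : sin s ^ n ≤ sin t ^ n :=
      pow_le_pow_left₀ (hsp s hs).le (sin_le_sin_of_le_of_le_pi_div_two (by linarith [hs.1]) ht.2.le hst) n
    have a2 : cos (π/4) ^ α ≤ cos t ^ α :=
      rpow_le_rpow hc4.le (cos_le_cos_of_nonneg_of_le_pi ht.1.le (by linarith) ht4) (by linarith)
    have a3 : 0 < sin t ^ n := pow_pos (hsp t ht) n
    have a4 := hsle _ h4
    have a5 : 0 < cos (π/4) ^ α := by positivity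
    have a7 : 0 < sin (π/4) ^ n := by positivity
    have a8 : 0 < cos t ^ α := rpow_pos_of_pos (hcp t ht) _
    calc cos s ^ α * sin s ^ n ≤ 1 * sin t ^ n :=
          mul_le_mul (hcle s hs) a1 (pow_pos (hsp s hs) n).le zero_le_one
      _ = K * (cos (π/4) ^ α * sin (π/4) ^ n) * sin t ^ n := by rw [hK1]
      _ ≤ K * (cos t ^ α * 1) * sin t ^ n := by gcongr
      _ = _ := by ring
  have hqm2 : ∀ s ∈ Ioo 0 (π/2), ∀ t ∈ Ioo 0 (π/2), t ≤ s → π/4 ≤ t →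
      cos s ^ α * sin s ^ n ≤ K * (cos t ^ α * sin t ^ n) := by
    intro s hs t ht hst ht4
    have a1 : sin (π/4) ^ n ≤ sin t ^ n :=
      pow_le_pow_left₀ hs4.le (sin_le_sin_of_le_of_le_pi_div_two (by linarith) ht.2.le ht4) n
    have a2 : cos s ^ α ≤ cos t ^ α :=
      rpow_le_rpow (hcp s hs).le (cos_le_cos_of_nonneg_of_le_pi ht.1.le (by linarith [hs.2]) hst) (by linarith)
    have a4 := hcle _ h4
    have a5 : 0 < cos (π/4) ^ α := by positivity
    have a7 : 0 < sin (π/4) ^ n := by positivity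
    have a8 : 0 < cos t ^ α := rpow_pos_of_pos (hcp t ht) _
    calc cos s ^ α * sin s ^ n ≤ cos t ^ α * 1 :=
          mul_le_mul a2 (hsle s hs) (pow_pos (hsp s hs) n).le a8.le
      _ = K * (cos (π/4) ^ α * sin (π/4) ^ n) * cos t ^ α := by rw [hK1]; ring
      _ ≤ K * (1 * sin t ^ n) * cos t ^ α := by gcongr
      _ = _ := by ring
  refine ⟨C₀ * K, by positivity, fun t ht => ?_⟩
  have hpt : 0 < cos t ^ α * sin t ^ n := by
    have := hcp t ht; have := hsp t ht; positivity
  rcases le_total t (π/4) with ht4 | ht4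
  · rw [min_eq_left (by linarith)]
    have hseg : ∀ s ∈ Ioo 0 t, |P t - P s| ≤ C₀ * K * t * (cos t ^ α * sin t ^ n) := by
      intro s hs
      have hsI : ∀ r ∈ Icc s t, r ∈ Ioo 0 (π/2) := fun r hr => ⟨hs.1.trans_le hr.1, hr.2.trans_lt ht.2⟩
      have := norm_image_sub_le_of_norm_deriv_le_segment' (f := P) (C := C₀ * K * (cos t ^ α * sin t ^ n))
        (fun r hr => (hP r (hsI r hr)).hasDerivWithinAt)
        (fun r hr => by
          have hr' := hsI r (Ico_subset_Icc_self hr)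
          refine (hPb r hr').trans ?_
          have := hqm1 r hr' t ht hr.2.le ht4
          rw [mul_assoc]
          exact mul_le_mul_of_nonneg_left this hC0'.le) t ⟨hs.2.le, le_rfl⟩
      rw [Real.norm_eq_abs] at this
      refine this.trans ?_
      have h5 : t - s ≤ t := by linarith [hs.1]
      have h6 : 0 < C₀ * K * (cos t ^ α * sin t ^ n) := by positivity
      nlinarith
    have hl1 : Tendsto (fun s => |P t - P s|) (𝓝[>] 0) (𝓝 (|P t - 0|)) := (hP0.const_sub _).abs
    rw [sub_zero] at hl1
    refine le_of_tendsto hl1 ?_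
    filter_upwards [Ioo_mem_nhdsGT ht.1] with s hs using hseg s hs
  · rw [min_eq_right (by linarith)]
    have hsI : ∀ r ∈ Ico t (π/2), r ∈ Ioo 0 (π/2) := fun r hr => ⟨ht.1.trans_le hr.1, hr.2⟩
    by_contra! hcon
    set D := C₀ * K * (π/2 - t) * (cos t ^ α * sin t ^ n) with hD
    have hseg : ∀ s ∈ Ico t (π/2), |P s - P t| ≤ D := by
      intro s hs
      have hsI' : ∀ r ∈ Icc t s, r ∈ Ioo 0 (π/2) := fun r hr => ⟨ht.1.trans_le hr.1, hr.2.trans_lt hs.2⟩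
      have := norm_image_sub_le_of_norm_deriv_le_segment' (f := P) (C := C₀ * K * (cos t ^ α * sin t ^ n))
        (fun r hr => (hP r (hsI' r hr)).hasDerivWithinAt)
        (fun r hr => by
          have hr' := hsI' r (Ico_subset_Icc_self hr)
          refine (hPb r hr').trans ?_
          have := hqm2 r hr' t ht hr.1 ht4
          rw [mul_assoc]
          exact mul_le_mul_of_nonneg_left this hC0'.le) s ⟨hs.1, le_rfl⟩
      rw [Real.norm_eq_abs] at this
      refine this.trans ?_
      have h5 : s - t ≤ π/2 - t := by linarith [hs.2]
      have h6 : 0 < C₀ * K * (cos t ^ α * sin t ^ n) := by positivity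
      rw [hD]
      nlinarith
    set δ := |P t| - D with hδ
    have hδ0 : 0 < δ := by linarith
    have hpc : ∀ s ∈ Ico t (π/2), cos s ^ α * sin s ^ n ≤ π/2 - s := by
      intro s hs
      have hs' := hsI s hs
      have a1 : cos s ^ α ≤ cos s ^ (1:ℝ) := rpow_le_rpow_of_exponent_ge (hcp s hs') (cos_le_one s) hα1
      rw [rpow_one] at a1
      have a2 : cos s ≤ π/2 - s := by
        rw [← sin_pi_div_two_sub]; exact sin_le (by linarith [hs.2])
      calc _ ≤ cos s * 1 := mul_le_mul a1 (hsle s hs') (pow_pos (hsp s hs') n).le (hcp s hs').le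
        _ ≤ _ := by linarith
    have hquot : ∀ s ∈ Ico t (π/2), ∀ x, δ ≤ x → δ / (π/2 - s) ≤ x / (cos s ^ α * sin s ^ n) := by
      intro s hs x hx
      have hs' := hsI s hs
      have := hcp s hs'; have := hsp s hs'
      exact div_le_div₀ (hδ0.le.trans hx) hx (by positivity) (hpc s hs)
    have hwM : ∀ s ∈ Ico t (π/2), |w s| ≤ M := by
      intro s hs
      obtain ⟨h1, h2⟩ := hwb s (hsI s hs)
      rw [abs_le]; constructor <;> linarith
    rcases le_total 0 (P t) with hPt | hPt
    · rw [abs_of_nonneg hPt] at hδ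
      refine no_blowup ht.2 hδ0 (fun s hs => hw s (hsI s hs)) (fun s hs => hquot s hs _ ?_) hwM
      have := (abs_le.1 (hseg s hs)).1
      linarith
    · rw [abs_of_nonpos hPt] at hδ
      refine no_blowup ht.2 hδ0 (u := fun s => -w s) (fun s hs => (hw s (hsI s hs)).neg) (fun s hs => ?_)
        (fun s hs => by rw [abs_neg]; exact hwM s hs)
      rw [← neg_div]
      refine hquot s hs _ ?_
      have := (abs_le.1 (hseg s hs)).2
      linarith

lemma zonal_smooth (n : ℕ) {α l q : ℝ} {w P : ℝ → ℝ} 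
    (hwb : ∀ θ ∈ Ioo 0 (π/2), 0 < w θ)
    (hw : ∀ θ ∈ Ioo 0 (π/2), HasDerivAt w (P θ / (cos θ ^ α * sin θ ^ n)) θ)
    (hP : ∀ θ ∈ Ioo 0 (π/2), HasDerivAt P
        (-(cos θ ^ α * sin θ ^ n * (l * w θ - cos θ ^ ((q-1)*α/2) * w θ ^ q))) θ) :
    ContDiffOn ℝ (⊤ : ℕ∞) w (Ioo 0 (π/2)) := by
  have hpi := pi_pos
  have hcp : ∀ t ∈ Ioo 0 (π/2), 0 < cos t := fun t ht => cos_pos_of_mem_Ioo ⟨by linarith [ht.1], ht.2⟩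
  have hsp : ∀ t ∈ Ioo 0 (π/2), 0 < sin t := fun t ht => sin_pos_of_pos_of_lt_pi ht.1 (by linarith [ht.2])
  have key : ∀ k : ℕ, ContDiffOn ℝ k w (Ioo 0 (π/2)) ∧ ContDiffOn ℝ k P (Ioo 0 (π/2)) := by
    intro k
    induction k with
    | zero =>
      simp only [Nat.cast_zero, contDiffOn_zero]
      exact ⟨fun t ht => (hw t ht).continuousAt.continuousWithinAt,
        fun t ht => (hP t ht).continuousAt.continuousWithinAt⟩
    | succ k ih =>
      obtain ⟨i1, i2⟩ := ih
      have hcos : ∀ r : ℝ, ContDiffOn ℝ k (fun t => cos t ^ r) (Ioo 0 (π/2)) := fun r =>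
        contDiff_cos.contDiffOn.rpow_const_of_ne fun t ht => (hcp t ht).ne'
      have hsin : ContDiffOn ℝ k (fun t => sin t ^ n) (Ioo 0 (π/2)) := (contDiff_sin.pow n).contDiffOn
      have hwq : ContDiffOn ℝ k (fun t => w t ^ q) (Ioo 0 (π/2)) :=
        i1.rpow_const_of_ne fun t ht => (hwb t ht).ne'
      have hp := (hcos α).mul hsin
      push_cast
      rw [contDiffOn_succ_iff_deriv_of_isOpen isOpen_Ioo, contDiffOn_succ_iff_deriv_of_isOpen isOpen_Ioo]
      refine ⟨⟨fun t ht => (hw t ht).differentiableAt.differentiableWithinAt, by simp, ?_⟩,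
        ⟨fun t ht => (hP t ht).differentiableAt.differentiableWithinAt, by simp, ?_⟩⟩
      · refine (i2.div hp fun t ht => ?_).congr fun t ht => (hw t ht).deriv
        have := hcp t ht; have := hsp t ht; positivity
      · exact ((hp.mul ((contDiffOn_const.mul i1).sub ((hcos _).mul hwq))).neg).congr fun t ht => (hP t ht).deriv
  exact contDiffOn_infty.2 fun k => (key k).1


lemma integrableOn_bdd {f : ℝ → ℝ} {b K : ℝ} (hf : ContinuousOn f (Ioo 0 b))
    (hK : ∀ t ∈ Ioo 0 b, |f t| ≤ K) : IntegrableOn f (Ioo 0 b) := by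
  refine ⟨hf.aestronglyMeasurable measurableSet_Ioo, .restrict_of_bounded (C := K) (by simp) ?_⟩
  filter_upwards [ae_restrict_mem measurableSet_Ioo] with t ht using hK t ht

/-- facts on an admissible function -/
lemma adm_facts (N : ℕ) {α q l : ℝ} (hq : 1 < q) {w : ℝ → ℝ} (hw : ZonalAdmissible N α q w) :
    IntegrableOn (fun θ => cos θ ^ α * sin θ ^ (N-2) * w θ ^ 2) (Ioo 0 (π/2)) ∧
    IntegrableOn (fun θ => ((deriv w θ)^2 - l * (w θ)^2
      + (2/(q+1)) * (Real.cos θ) ^ ((q-1)*α/2) * |w θ| ^ (q+1))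
      * (Real.cos θ) ^ α * (Real.sin θ)^(N-2)) (Ioo 0 (π/2)) := by
  have hpi := pi_pos
  obtain ⟨h1, h2, h3⟩ := hw
  have hcp : ∀ t ∈ Ioo 0 (π/2), 0 < cos t := fun t ht => cos_pos_of_mem_Ioo ⟨by linarith [ht.1], ht.2⟩
  have hsp : ∀ t ∈ Ioo 0 (π/2), 0 < sin t := fun t ht => sin_pos_of_pos_of_lt_pi ht.1 (by linarith [ht.2])
  have hcos : ContinuousOn (fun t => cos t ^ α) (Ioo 0 (π/2)) :=
    ContinuousOn.rpow_const (by fun_prop) fun t ht => Or.inl (hcp t ht).ne'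
  have hwc := h1.continuousOn
  have i1 : IntegrableOn (fun θ => cos θ ^ α * sin θ ^ (N-2) * w θ ^ 2) (Ioo 0 (π/2)) := by
    refine Integrable.mono' h2 ?_ ?_
    · refine ContinuousOn.aestronglyMeasurable ?_ measurableSet_Ioo
      fun_prop
    · filter_upwards [ae_restrict_mem measurableSet_Ioo] with t ht
      have := hcp t ht; have := hsp t ht
      rw [Real.norm_eq_abs, abs_of_nonneg (by positivity)]
      have : 0 ≤ deriv w t ^ 2 * cos t ^ α * sin t ^ (N-2) := by positivity
      nlinarith
  refine ⟨i1, ?_⟩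
  have := (h2.sub (i1.const_mul (l+1))).add (h3.const_mul (2/(q+1)))
  refine IntegrableOn.congr_fun this ?_ measurableSet_Ioo
  intro t ht
  have e : cos t ^ ((q+1)*α/2) = cos t ^ ((q-1)*α/2) * cos t ^ α := by
    rw [← rpow_add (hcp t ht)]; congr 1; ring
  simp only [Pi.add_apply, Pi.sub_apply]
  rw [e]; ring

set_option maxHeartbeats 2000000 in
lemma zonal_main (N : ℕ) {α q ℓ μ₁ : ℝ} (hα1 : 1 ≤ α) (hα2 : α < 2) (hq : 1 < q) (hℓ : μ₁ < ℓ) :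
    ∃ w₀ : ℝ → ℝ,
      ZonalAdmissible N α q w₀ ∧
      (∀ θ ∈ Set.Ioo 0 (π/2), 0 ≤ w₀ θ) ∧
      ContDiffOn ℝ (⊤ : ℕ∞) w₀ (Set.Ioo 0 (π/2)) ∧
      zonalJ N α ℓ μ₁ q w₀ < 0 ∧
      ∀ w : ℝ → ℝ, ZonalAdmissible N α q w → zonalJ N α ℓ μ₁ q w₀ ≤ zonalJ N α ℓ μ₁ q w := by
  have hl : 0 < ℓ - μ₁ := by linarith
  obtain ⟨w₀, P, ε, M, hε, hb, hw, hP, hP0⟩ := zonal_solution (N-2) hα1 hα2 hl hq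
  obtain ⟨C, hC, hPb⟩ := flux_bound (N-2) hα1 hl hq hε hb hw hP hP0
  have hw0 : ∀ θ ∈ Ioo 0 (π/2), 0 < w₀ θ := fun t ht => hε.trans_le (hb t ht).1
  have hsm := zonal_smooth (N-2) hw0 hw hP
  have hpi := pi_pos
  have hpi2 : 0 < π/2 := by positivity
  have hcp : ∀ t ∈ Ioo 0 (π/2), 0 < cos t := fun t ht => cos_pos_of_mem_Ioo ⟨by linarith [ht.1], ht.2⟩
  have hsp : ∀ t ∈ Ioo 0 (π/2), 0 < sin t := fun t ht => sin_pos_of_pos_of_lt_pi ht.1 (by linarith [ht.2])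
  have hcos : ∀ r : ℝ, ContinuousOn (fun t => cos t ^ r) (Ioo 0 (π/2)) := fun r =>
    ContinuousOn.rpow_const (by fun_prop) fun t ht => Or.inl (hcp t ht).ne'
  have hcos1 : ∀ r : ℝ, 0 ≤ r → ∀ t ∈ Ioo 0 (π/2), cos t ^ r ≤ 1 := fun r hr t ht =>
    rpow_le_one (hcp t ht).le (cos_le_one t) hr
  have hsin1 : ∀ t ∈ Ioo 0 (π/2), sin t ^ (N-2) ≤ 1 := fun t ht =>
    pow_le_one₀ (hsp t ht).le (sin_le_one t)
  have hpp : ∀ t ∈ Ioo 0 (π/2), 0 < cos t ^ α * sin t ^ (N-2) := fun t ht => by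
    have := hcp t ht; have := hsp t ht; positivity
  have hsm1 : ContDiffOn ℝ 1 w₀ (Ioo 0 (π/2)) := hsm.of_le (by exact_mod_cast le_top)
  have hwc := hsm1.continuousOn
  have hPc : ContinuousOn P (Ioo 0 (π/2)) := fun t ht => (hP t ht).continuousAt.continuousWithinAt
  have hdc : ContinuousOn (deriv w₀) (Ioo 0 (π/2)) := hsm1.continuousOn_deriv_of_isOpen isOpen_Ioo le_rfl
  have hdb : ∀ t ∈ Ioo 0 (π/2), |deriv w₀ t| ≤ C * (π/2) := by
    intro t ht
    rw [(hw t ht).deriv, abs_div, abs_of_pos (hpp t ht), div_le_iff₀ (hpp t ht)]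
    refine (hPb t ht).trans (mul_le_mul_of_nonneg_right (mul_le_mul_of_nonneg_left ?_ hC) (hpp t ht).le)
    exact (min_le_left _ _).trans ht.2.le
  have hM : 0 < M := by
    have h4 : (π/4) ∈ Ioo 0 (π/2) := ⟨by linarith, by linarith⟩
    have := hb _ h4; linarith
  have hwqc : ContinuousOn (fun t => w₀ t ^ (q+1)) (Ioo 0 (π/2)) :=
    hwc.rpow_const fun t ht => Or.inl (hw0 t ht).ne'
  have hwqc' : ContinuousOn (fun t => w₀ t ^ q) (Ioo 0 (π/2)) :=
    hwc.rpow_const fun t ht => Or.inl (hw0 t ht).ne'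
  have hwqb : ∀ t ∈ Ioo 0 (π/2), w₀ t ^ (q+1) ≤ M ^ (q+1) := fun t ht =>
    rpow_le_rpow (hw0 t ht).le (hb t ht).2 (by linarith)
  have hadm : ZonalAdmissible N α q w₀ := by
    refine ⟨hsm1, ?_, ?_⟩
    · refine integrableOn_bdd (K := ((C * (π/2))^2 + M^2) * 1 * 1) ?_ ?_
      · have := hcos α; fun_prop
      · intro t ht
        have a1 := hcp t ht; have a2 := hsp t ht
        have a3 : deriv w₀ t ^ 2 ≤ (C * (π/2))^2 := by rw [← sq_abs]; exact pow_le_pow_left₀ (abs_nonneg _) (hdb t ht) 2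
        have a4 : w₀ t ^ 2 ≤ M ^ 2 := pow_le_pow_left₀ (hw0 t ht).le (hb t ht).2 2
        have a5 := hcos1 α (by linarith) t ht
        have a6 := hsin1 t ht
        rw [abs_of_nonneg (by positivity)]
        gcongr
    · refine integrableOn_bdd (K := M ^ (q+1) * 1 * 1) ?_ ?_
      · have h1 : ContinuousOn (fun t => |w₀ t| ^ (q+1)) (Ioo 0 (π/2)) :=
          hwqc.congr fun t ht => by simp only; rw [abs_of_pos (hw0 t ht)]
        have := hcos ((q+1)*α/2); fun_prop
      · intro t ht
        have a1 := hcp t ht; have a2 := hsp t ht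
        have a5 := hcos1 ((q+1)*α/2) (by positivity) t ht
        have a6 := hsin1 t ht
        have a7 := hwqb t ht
        have a8 := hw0 t ht
        rw [abs_of_nonneg (by positivity), abs_of_pos a8]
        gcongr
  set E : ℝ → ℝ := fun t => (q-1)/(q+1) * (cos t ^ α * sin t ^ (N-2)) * cos t ^ ((q-1)*α/2) * w₀ t ^ (q+1) with hE
  have hq10 : 0 < q - 1 := by linarith
  have hE0 : ∀ t ∈ Ioo 0 (π/2), 0 < E t := by
    intro t ht
    have a1 := hcp t ht; have a2 := hsp t ht; have a8 := hw0 t ht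
    simp only [hE]; positivity
  have hEi : IntegrableOn E (Ioo 0 (π/2)) := by
    refine integrableOn_bdd (K := (q-1)/(q+1) * (1 * 1) * 1 * M ^ (q+1)) ?_ ?_
    · have := hcos α; have := hcos ((q-1)*α/2); simp only [hE]; fun_prop
    · intro t ht
      rw [abs_of_pos (hE0 t ht)]
      have a1 := hcp t ht; have a2 := hsp t ht
      have a4 := hcos1 α (by linarith) t ht
      have a5 := hcos1 ((q-1)*α/2) (by positivity) t ht
      have a6 := hsin1 t ht
      have a7 := hwqb t ht
      have a8 := hw0 t ht
      simp only [hE]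
      gcongr
  have hEpos : 0 < ∫ t in Ioo 0 (π/2), E t := by
    rw [setIntegral_pos_iff_support_of_nonneg_ae]
    · have : Function.support E ∩ Ioo 0 (π/2) = Ioo 0 (π/2) :=
        inter_eq_right.2 fun t ht => (hE0 t ht).ne'
      rw [this]; simp [hpi]
    · filter_upwards [ae_restrict_mem measurableSet_Ioo] with t ht using (hE0 t ht).le
    · exact hEi
  obtain ⟨hg0, hR0⟩ := adm_facts N (l := ℓ - μ₁) hq hadm
  have hJ0 : zonalJ N α ℓ μ₁ q w₀ ≤ -∫ t in Ioo 0 (π/2), E t := by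
    have := nonneg_of_flux (C := C / ε) (f := fun θ => -((((deriv w₀ θ)^2 - (ℓ - μ₁) * (w₀ θ)^2
      + (2/(q+1)) * (Real.cos θ) ^ ((q-1)*α/2) * |w₀ θ| ^ (q+1))
      * (Real.cos θ) ^ α * (Real.sin θ)^(N-2)) + E θ)) hpi2 (by positivity) (hR0.add hEi).neg hg0
      (fun t ht => mul_nonneg (hpp t ht).le (sq_nonneg _))
      (B := fun t => -(P t * w₀ t)) (fun t ht => ((hP t ht).mul (hw t ht)).neg)
      (by
        have := hcos α; have := hcos ((q-1)*α/2)
        have h1 : ContinuousOn (fun t => P t / (cos t ^ α * sin t ^ (N-2))) (Ioo 0 (π/2)) :=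
          hPc.div (by fun_prop) fun t ht => (hpp t ht).ne'
        fun_prop)
      (by
        intro t ht
        refine le_of_eq ?_
        have a8 := hw0 t ht
        rw [(hw t ht).deriv, abs_of_pos a8]
        have hp := hpp t ht
        have e1 : w₀ t ^ (q+1) = w₀ t ^ q * w₀ t := by rw [← rpow_add_one a8.ne']
        simp only [hE]
        rw [e1]
        have hp1 : 0 < cos t ^ α := by have := hcp t ht; positivity
        have hp2 := hsp t ht
        have : 0 < q + 1 := by linarith
        field_simp
        ring)
      (by
        intro t ht
        have a8 := hw0 t ht
        rw [abs_neg, abs_mul, abs_of_pos a8]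
        have h1 := hPb t ht
        have h2 := (hb t ht).1
        have hp := hpp t ht
        have hm : 0 ≤ min t (π/2 - t) := le_min ht.1.le (by linarith [ht.2])
        calc |P t| * w₀ t ≤ C * min t (π/2 - t) * (cos t ^ α * sin t ^ (N-2)) * w₀ t := by gcongr
          _ = C / ε * min t (π/2 - t) * (cos t ^ α * sin t ^ (N-2) * (ε * w₀ t)) := by field_simp
          _ ≤ C / ε * min t (π/2 - t) * (cos t ^ α * sin t ^ (N-2) * (w₀ t * w₀ t)) := by gcongr
          _ = _ := by ring)
    rw [integral_neg, integral_add hR0 hEi] at this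
    unfold zonalJ
    linarith
  refine ⟨w₀, hadm, fun t ht => (hw0 t ht).le, hsm, by linarith, fun w hwadm => hJ0.trans ?_⟩
  obtain ⟨hg1, hR1⟩ := adm_facts N (l := ℓ - μ₁) hq hwadm
  have hw1 := hwadm.1
  have hwd : ∀ t ∈ Ioo 0 (π/2), HasDerivAt w (deriv w t) t := fun t ht =>
    ((hw1.differentiableOn (by simp)).differentiableAt (isOpen_Ioo.mem_nhds ht)).hasDerivAt
  have hwc1 := hw1.continuousOn
  have hdc1 : ContinuousOn (deriv w) (Ioo 0 (π/2)) := hw1.continuousOn_deriv_of_isOpen isOpen_Ioo le_rfl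
  have := nonneg_of_flux (C := C / ε) (f := fun θ => (((deriv w θ)^2 - (ℓ - μ₁) * (w θ)^2
      + (2/(q+1)) * (Real.cos θ) ^ ((q-1)*α/2) * |w θ| ^ (q+1))
      * (Real.cos θ) ^ α * (Real.sin θ)^(N-2)) + E θ) hpi2 (by positivity) (hR1.add hEi) hg1
      (fun t ht => mul_nonneg (hpp t ht).le (sq_nonneg _))
      (B := fun t => P t * (w t ^ 2 / w₀ t))
      (B' := fun t => -(cos t ^ α * sin t ^ (N-2) * ((ℓ - μ₁) * w₀ t - cos t ^ ((q-1)*α/2) * w₀ t ^ q)) * (w t ^ 2 / w₀ t)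
        + P t * (2 * w t * deriv w t / w₀ t - w t ^ 2 * (P t / (cos t ^ α * sin t ^ (N-2))) / w₀ t ^ 2))
      (by
        intro t ht
        have a8 := hw0 t ht
        refine ((hP t ht).mul (((hwd t ht).pow 2).div (hw t ht) a8.ne')).congr_deriv ?_
        simp only [Pi.pow_apply, Pi.div_apply]
        push_cast
        congr 2
        rw [div_sub_div _ _ a8.ne' (by positivity), div_eq_div_iff (by positivity) (by positivity)]
        ring)
      (by
        have := hcos α; have := hcos ((q-1)*α/2)
        have h1 : ContinuousOn (fun t => P t / (cos t ^ α * sin t ^ (N-2))) (Ioo 0 (π/2)) :=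
          hPc.div (by fun_prop) fun t ht => (hpp t ht).ne'
        have h2 : ContinuousOn (fun t => w t ^ 2 / w₀ t) (Ioo 0 (π/2)) :=
          (hwc1.pow 2).div hwc fun t ht => (hw0 t ht).ne'
        have h3 : ContinuousOn (fun t => 2 * w t * deriv w t / w₀ t) (Ioo 0 (π/2)) :=
          ContinuousOn.div (by fun_prop) hwc fun t ht => (hw0 t ht).ne'
        have h4 : ContinuousOn (fun t => w t ^ 2 * (P t / (cos t ^ α * sin t ^ (N-2))) / w₀ t ^ 2) (Ioo 0 (π/2)) :=
          ContinuousOn.div (by fun_prop) (by fun_prop) fun t ht => (pow_pos (hw0 t ht) 2).ne'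
        fun_prop)
      (by
        intro t ht
        have h1 := picone_pt (l := ℓ - μ₁) (u := w t) (d := deriv w t) (P := P t) hq (hpp t ht)
          (rpow_pos_of_pos (hcp t ht) ((q-1)*α/2)) (hw0 t ht)
        simp only [hE]
        refine h1.trans (le_of_eq ?_)
        ring)
      (by
        intro t ht
        have a8 := hw0 t ht
        have h1 := hPb t ht
        have h2 := (hb t ht).1
        have hp := hpp t ht
        have hm : 0 ≤ min t (π/2 - t) := le_min ht.1.le (by linarith [ht.2])
        rw [abs_mul, abs_of_nonneg (a := w t ^ 2 / w₀ t) (by positivity)]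
        calc |P t| * (w t ^ 2 / w₀ t) ≤ C * min t (π/2 - t) * (cos t ^ α * sin t ^ (N-2)) * (w t ^ 2 / ε) := by gcongr
          _ = _ := by ring)
  rw [integral_add hR1 hEi] at this
  unfold zonalJ
  linarith

end ZonalAux


/-- existence of a nontrivial nonnegative smooth minimizer of the zonal
energy functional `𝒥_κ` in the subcritical range `1 < q < q_c` (where
`ℓ_{N,q} > μ_{κ,1}`): there is an admissible nonnegative smooth `w₀` with `J(w₀) < 0`
minimizing `J` among all admissible functions. -/
theorem zonal_minimizer_exists (N : ℕ) (hN : 2 ≤ N) (κ : ℝ)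
    (hκ0 : 0 < κ) (hκ4 : κ ≤ 1/4) (α : ℝ) (hα : α = 1 + Real.sqrt (1 - 4*κ))
    (q : ℝ) (hq1 : 1 < q) (hqc : q < (2*(N : ℝ) + α) / (2*(N : ℝ) - 4 + α))
    (ℓ μ₁ : ℝ)
    (hℓ : ℓ = (2/(q-1)) * (2*q/(q-1) - (N : ℝ)))
    (hμ₁ : μ₁ = (α/2) * ((N : ℝ) + α/2 - 2))
    (hℓμ : ℓ > μ₁) :
    ∃ w₀ : ℝ → ℝ,
      ZonalAdmissible N α q w₀ ∧
      (∀ θ ∈ Set.Ioo 0 (π/2), 0 ≤ w₀ θ) ∧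
      ContDiffOn ℝ (⊤ : ℕ∞) w₀ (Set.Ioo 0 (π/2)) ∧
      zonalJ N α ℓ μ₁ q w₀ < 0 ∧
      ∀ w : ℝ → ℝ, ZonalAdmissible N α q w → zonalJ N α ℓ μ₁ q w₀ ≤ zonalJ N α ℓ μ₁ q w := by
  have h1 : 0 ≤ Real.sqrt (1 - 4*κ) := Real.sqrt_nonneg _
  have h2 : Real.sqrt (1 - 4*κ) < 1 := by
    rw [Real.sqrt_lt' one_pos]; linarith
  exact ZonalAux.zonal_main N (by linarith) (by linarith) hq1 hℓμ
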